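/- arXiv:math/0304495 — 4 statements merged into one kernel-verified Lean document; each statement's English description precedes it below -/
import Mathlib

section
/- For every finite group G there exists an assignment to each commutative ring R of a commutative ring structure on the set W_G(R) of all functions from the set of conjugacy classes of subgroups of G to R, such that: (a) for every ring homomorphism h : R → R', the map W_G(h) : W_G(R) → W_G(R') given by x ↦ h ∘ x is a ring homomorphism, and (b) for every subgroup U ≤ G and every commutative ring R, the ghost map φ_U : W_G(R) → R, φ_U(x) = Σ'_{U ⪯ V ≤ G} |(G/V)^U| · x_V^{(V:U)}, is a ring homomorphism. -/
open MulAction Pointwise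
open scoped Classical

/-- The set of conjugacy classes of subgroups of `G`: the quotient of the set of
subgroups of `G` by the conjugation action of `G`. -/
abbrev SubgroupConjClasses (G : Type*) [Group G] :=
  MulAction.orbitRel.Quotient (ConjAct G) (Subgroup G)

/-- `U` is subconjugate to `V`: `U ≤ gVg⁻¹` for some `g ∈ G`. -/
def Subconj {G : Type*} [Group G] (U V : Subgroup G) : Prop :=
  ∃ g : ConjAct G, U ≤ g • V

/-- The ghost map `φ_U : W_G(R) → R`,
`φ_U(x) = Σ'_{U ⪯ V ≤ G} |(G/V)^U| · x_V^{(V:U)}`, with exactly one summand for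
each conjugacy class of subgroups `V` of `G` to which `U` is subconjugate. -/
noncomputable def ghost {G : Type*} [Group G] [Fintype G] {R : Type*} [CommRing R]
    (U : Subgroup G) (x : SubgroupConjClasses G → R) : R :=
  ∑ᶠ C : SubgroupConjClasses G,
    if Subconj U (Quotient.out C) then
      (Nat.card (MulAction.fixedPoints U (G ⧸ (Quotient.out C : Subgroup G))) : R) *
        x C ^ (Nat.card (Quotient.out C : Subgroup G) / Nat.card U)
    else 0

/-- The underlying set of the ring of `G`-Witt vectors with coefficients in `R`:
functions from the set of conjugacy classes of subgroups of `G` to `R`. -/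
def WittVec (G : Type u) [Group G] (R : Type v) : Type (max u v) :=
  SubgroupConjClasses G → R

namespace DS

lemma burnside {N Y A : Type*} [Group N] [Fintype N] [MulAction N Y] [Fintype Y] [CommRing A]
    (w : Y → A) (hw : ∀ (n : N) y, w (n • y) = w y) :
    (Nat.card N : A) ∣ ∑ g : N, ∑ y : Y, if g • y = y then w y else 0 := by
  rw [Finset.sum_comm]
  have h1 : ∀ y : Y, (∑ g : N, if g • y = y then w y else 0)
      = (Nat.card (stabilizer N y) : A) * w y := by
    intro y
    rw [← Finset.sum_filter, Finset.sum_const, nsmul_eq_mul, Nat.card_eq_fintype_card,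
      Fintype.card_subtype]
    congr 3
  rw [Finset.sum_congr rfl (fun y _ => h1 y),
    ← Finset.sum_fiberwise Finset.univ (fun y : Y => (Quotient.mk (orbitRel N Y) y))]
  apply Finset.dvd_sum
  intro ω _
  induction ω using Quotient.inductionOn with
  | _ y0 =>
  have h2 : ∀ y ∈ Finset.univ.filter (fun y : Y => Quotient.mk (orbitRel N Y) y
      = Quotient.mk (orbitRel N Y) y0),
      (Nat.card (stabilizer N y) : A) * w y = (Nat.card (stabilizer N y0) : A) * w y0 := by
    intro y hy
    simp only [Finset.mem_filter, Finset.mem_univ, true_and] at hy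
    have hy' : y ∈ orbit N y0 := by
      have := Quotient.exact hy
      exact this
    obtain ⟨g, rfl⟩ := hy'
    simp only
    rw [hw, Nat.card_congr (stabilizerEquivStabilizer (g := g) (a := y0) (b := g • y0) rfl).toEquiv]
  rw [Finset.sum_congr rfl h2, Finset.sum_const, nsmul_eq_mul, ← mul_assoc]
  refine Dvd.intro (w y0) ?_
  congr 1
  rw [← Nat.cast_mul]
  congr 1
  have := card_orbit_mul_card_stabilizer_eq_card_group N y0
  rw [Nat.card_eq_fintype_card, ← this, Nat.card_eq_fintype_card]
  congr 1
  rw [Fintype.card_subtype]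
  congr 1
  ext y
  simp only [Finset.mem_filter, Finset.mem_univ, true_and]
  rw [Quotient.eq]
  rfl

variable {G : Type*} [Group G] [Fintype G]

def Good {A : Type*} [CommRing A] (b : Subgroup G → A) : Prop :=
  ∀ U : Subgroup G, (Nat.card (Subgroup.normalizer (U : Set G)) : A) ∣
    ∑ g : Subgroup.normalizer (U : Set G), b (U ⊔ Subgroup.zpowers (g : G))

lemma good_of_set {Y A : Type*} [MulAction G Y] [Fintype Y] [CommRing A]
    (w : Y → A) (hw : ∀ (g : G) y, w (g • y) = w y) :
    Good (fun V : Subgroup G => ∑ y : Y, if (∀ v ∈ V, v • y = y) then w y else 0) := by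
  intro U
  have := burnside (N := Subgroup.normalizer (U : Set G))
    (fun y : Y => if (∀ v ∈ U, v • y = y) then w y else 0) (by
      intro n y
      have : (∀ v ∈ U, v • (n • y) = n • y) ↔ (∀ v ∈ U, v • y = y) := by
        obtain ⟨n, hn⟩ := n
        simp only [Subgroup.mk_smul]
        constructor
        · intro h v hv
          have := h _ ((Subgroup.mem_normalizer_iff.1 hn v).1 hv)
          rw [← mul_smul, inv_mul_cancel_right, mul_smul] at this
          exact (smul_left_cancel_iff n).1 this
        · intro h v hv
          have := h _ ((Subgroup.mem_normalizer_iff''.1 hn v).1 hv)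
          rw [mul_smul, mul_smul, inv_smul_eq_iff] at this
          exact this
      simp only [this]
      split_ifs
      · exact hw _ _
      · rfl)
  simp_rw [← ite_and] at this
  convert this using 4 with g _ y
  have key : U ⊔ Subgroup.zpowers (g : G) ≤ stabilizer G y ↔ U ≤ stabilizer G y ∧ (g:G) ∈ stabilizer G y := by
    rw [sup_le_iff, Subgroup.zpowers_le]
  have e1 : ∀ V : Subgroup G, V ≤ stabilizer G y ↔ ∀ v ∈ V, v • y = y := fun V => Iff.rfl
  rw [e1, e1] at key
  rw [key]
  rw [and_comm]
  rfl

lemma Good.add {A : Type*} [CommRing A] {b c : Subgroup G → A} (hb : Good b) (hc : Good c) :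
    Good (fun V => b V + c V) := by
  intro U
  rw [Finset.sum_add_distrib]
  exact dvd_add (hb U) (hc U)

lemma Good.neg {A : Type*} [CommRing A] {b : Subgroup G → A} (hb : Good b) :
    Good (fun V => - b V) := by
  intro U
  rw [Finset.sum_neg_distrib]
  exact (dvd_neg).2 (hb U)

lemma Good.sum {A ι : Type*} [CommRing A] (s : Finset ι) {b : ι → Subgroup G → A}
    (hb : ∀ i ∈ s, Good (b i)) : Good (fun V => ∑ i ∈ s, b i V) := by
  intro U
  rw [Finset.sum_comm]
  exact Finset.dvd_sum fun i hi => hb i hi U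

lemma Good.mul_const {A : Type*} [CommRing A] {b : Subgroup G → A} (hb : Good b) (c : A) :
    Good (fun V => b V * c) := by
  intro U
  rw [← Finset.sum_mul]
  exact (hb U).mul_right c

lemma good_card (Y A : Type*) [MulAction G Y] [Fintype Y] [CommRing A] :
    Good (fun V : Subgroup G => (Nat.card (fixedPoints V Y) : A)) := by
  have := good_of_set (G := G) (Y := Y) (fun _ => (1 : A)) (fun _ _ => rfl)
  convert this using 2 with V
  rw [← Finset.sum_filter, Finset.sum_const, nsmul_one, Nat.card_eq_fintype_card,
      Fintype.card_subtype]
  congr 2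
  ext y
  simp [mem_fixedPoints]

lemma sum_inv {A I : Type*} [CommRing A] [Fintype I] (V : Subgroup G) (S : G → Prop) [DecidablePred S]
    (hS : ∀ v ∈ V, ∀ t, S (v * t) ↔ S t) (m : I → A) :
    (∑ f : G → Option I, if (∀ v ∈ V, ∀ t, f (v⁻¹ * t) = f t) then
        ∏ t, (if S t then (f t).elim 0 m else (f t).elim 1 (fun _ => 0)) else 0)
      = (∑ i, m i ^ Nat.card V) ^ ((Finset.univ.filter S).card / Nat.card V) := by
  set Q := Quotient (QuotientGroup.rightRel V) with hQ
  set q : G → Q := Quotient.mk _ with hq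
  set K : G → Option I → A := fun t i => if S t then i.elim 0 m else i.elim 1 (fun _ => 0) with hK
  have hqv : ∀ v ∈ V, ∀ t, q (v * t) = q t := by
    intro v hv t
    apply Quotient.sound
    change QuotientGroup.rightRel V _ _
    rw [QuotientGroup.rightRel_apply]
    simpa using V.inv_mem hv
  have hqe : ∀ s t, q s = q t → ∃ v ∈ V, s = v * t := by
    intro s t h
    have h := Quotient.exact h
    change QuotientGroup.rightRel V _ _ at h
    rw [QuotientGroup.rightRel_apply] at h
    exact ⟨s * t⁻¹, by simpa using V.inv_mem h, by simp⟩
  have hcard : ∀ t0, (Finset.univ.filter (fun t => q t = q t0)).card = Nat.card V := by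
    intro t0
    rw [Nat.card_eq_fintype_card, ← Finset.card_univ]
    symm
    apply Finset.card_bij (fun (v : V) _ => (v : G) * t0)
    · intro v _
      simp [hqv v v.2]
    · intro a _ b _ h
      simpa using h
    · intro b hb
      obtain ⟨v, hv, rfl⟩ := hqe b t0 (by simpa using hb)
      exact ⟨⟨v, hv⟩, by simp⟩
  have hVpos : 0 < Nat.card V := Nat.card_pos
  have step1 : (∑ f : G → Option I, if (∀ v ∈ V, ∀ t, f (v⁻¹ * t) = f t) then
        ∏ t, K t (f t) else 0) = ∑ F : Q → Option I, ∏ t, K t (F (q t)) := by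
    rw [← Finset.sum_filter]
    symm
    apply Finset.sum_bij (fun (F : Q → Option I) _ => (fun t => F (q t)))
    · intro F _
      simp only [Finset.mem_filter, Finset.mem_univ, true_and]
      intro v hv t
      rw [hqv _ (V.inv_mem hv)]
    · intro F _ F' _ h
      funext o
      obtain ⟨t, rfl⟩ := Quotient.exists_rep o
      exact congrFun h t
    · intro f hf
      simp only [Finset.mem_filter, Finset.mem_univ, true_and] at hf
      refine ⟨fun o => f o.out, Finset.mem_univ _, ?_⟩
      funext t
      obtain ⟨v, hv, h⟩ := hqe (q t).out t (Quotient.out_eq _)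
      simp only
      rw [h]
      have := hf _ (V.inv_mem hv) t
      simpa using this
    · intros; rfl
  rw [step1]
  have step2 : ∀ F : Q → Option I, ∏ t, K t (F (q t))
      = ∏ o : Q, ∏ t ∈ Finset.univ.filter (fun t => q t = o), K t (F o) := by
    intro F
    rw [← Finset.prod_fiberwise Finset.univ q]
    refine Finset.prod_congr rfl fun o _ => Finset.prod_congr rfl fun t ht => ?_
    rw [(Finset.mem_filter.1 ht).2]
  rw [Finset.sum_congr rfl (fun F _ => step2 F)]
  have step3 := Finset.prod_univ_sum (fun _ : Q => (Finset.univ : Finset (Option I)))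
    (fun o i => ∏ t ∈ Finset.univ.filter (fun t => q t = o), K t i)
  rw [Fintype.piFinset_univ] at step3
  rw [← step3]
  have step4 : ∀ o : Q, (∑ i : Option I, ∏ t ∈ Finset.univ.filter (fun t => q t = o), K t i)
      = if S o.out then (∑ i, m i ^ Nat.card V) else 1 := by
    intro o
    have e : ∀ i, ∏ t ∈ Finset.univ.filter (fun t => q t = o), K t i
        = K o.out i ^ Nat.card V := by
      intro i
      rw [← hcard o.out]
      have ho : q o.out = o := Quotient.out_eq _
      rw [ho]
      apply Finset.prod_eq_pow_card
      intro t ht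
      obtain ⟨v, hv, rfl⟩ := hqe t o.out (by rw [ho]; exact (Finset.mem_filter.1 ht).2)
      simp only [hK, hS v hv]
    rw [Finset.sum_congr rfl (fun i _ => e i), Fintype.sum_option]
    by_cases h : S o.out
    · simp [hK, h]
    · simp [hK, h]
  rw [Finset.prod_congr rfl (fun o _ => step4 o), ← Finset.prod_filter, Finset.prod_const]
  congr 1
  symm
  apply Nat.div_eq_of_eq_mul_left hVpos
  rw [Finset.card_eq_sum_card_fiberwise (f := q) (t := Finset.univ.filter (fun o : Q => S o.out))]
  · rw [Finset.sum_const_nat (m := Nat.card V)]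
    intro o ho
    rw [← hcard o.out]
    congr 1
    ext t
    have ho' : q o.out = o := Quotient.out_eq _
    simp only [Finset.mem_filter, Finset.mem_univ, true_and] at ho ⊢
    rw [ho']
    constructor
    · exact fun h => h.2
    · intro h
      obtain ⟨v, hv, rfl⟩ := hqe t o.out (by rw [ho', h])
      exact ⟨(hS v hv _).2 ho, h⟩
  · intro t ht
    simp only [Finset.coe_filter, Finset.mem_univ, true_and, Set.mem_ofPred_eq] at ht ⊢
    obtain ⟨v, hv, h⟩ := hqe (q t).out t (Quotient.out_eq _)
    rw [h]
    exact (hS v hv _).2 ht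

open MvPolynomial in
lemma good_norm {σ : Type*} {I : Type} [Fintype I] (W : Subgroup G) (m : I → (σ →₀ ℕ)) :
    Good (fun V : Subgroup G => (Nat.card (fixedPoints V (G ⧸ W)) : MvPolynomial σ ℤ) *
      (expand (Nat.card V) (∑ i, monomial (m i) (1 : ℤ))) ^ (Nat.card W / Nat.card V)) := by
  let _ : MulAction G (G → Option I) := arrowAction (A := G)
  have hsm : ∀ (g : G) (f : G → Option I) (t : G), (g • f) t = f (g⁻¹ * t) := fun _ _ _ => rfl
  set M : I → MvPolynomial σ ℤ := fun i => monomial (m i) 1 with hM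
  have := good_of_set (G := G) (Y := (G ⧸ W) × (G → Option I))
    (fun y => ∏ t : G, (if (t : G ⧸ W) = y.1 then (y.2 t).elim 0 M
      else (y.2 t).elim 1 (fun _ => 0))) (by
      rintro g ⟨s, f⟩
      simp only [Prod.smul_mk, hsm]
      symm
      apply Fintype.prod_equiv (Equiv.mulLeft g)
      intro t
      simp only [Equiv.coe_mulLeft, inv_mul_cancel_left]
      have : (((g * t : G) : G ⧸ W) = g • s) ↔ ((t : G ⧸ W) = s) := by
        exact smul_left_cancel_iff (x := (t : G ⧸ W)) g
      simp only [this])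
  convert this using 2 with V
  rw [Fintype.sum_prod_type]
  have hx : expand (Nat.card V) (∑ i, M i) = ∑ i, M i ^ Nat.card V := by
    rw [map_sum]
    refine Finset.sum_congr rfl fun i _ => ?_
    simp only [hM]
    rw [expand_monomial, monomial_pow, one_pow]
  rw [hx]
  have inner : ∀ s : G ⧸ W, (∑ f : G → Option I, if (∀ v ∈ V, v • (s, f) = (s, f)) then
      (∏ t : G, (if (t : G ⧸ W) = s then (f t).elim 0 M
      else (f t).elim 1 (fun _ => 0))) else 0) = if s ∈ fixedPoints V (G ⧸ W) then
        (∑ i, M i ^ Nat.card V) ^ (Nat.card W / Nat.card V) else 0 := by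
    intro s
    have hfix : s ∈ fixedPoints V (G ⧸ W) ↔ ∀ v ∈ V, v • s = s := by
      rw [mem_fixedPoints]
      exact ⟨fun h v hv => h ⟨v, hv⟩, fun h v => h v v.2⟩
    by_cases hs : s ∈ fixedPoints V (G ⧸ W)
    · rw [if_pos hs]
      rw [hfix] at hs
      have hc : (Finset.univ.filter (fun t : G => (t : G ⧸ W) = s)).card = Nat.card W := by
        obtain ⟨t0, rfl⟩ := QuotientGroup.mk_surjective s
        rw [Nat.card_eq_fintype_card, ← Finset.card_univ]
        symm
        apply Finset.card_bij (fun (v : W) _ => t0 * (v : G))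
        · intro v _
          simp
        · intro a _ b _ h
          simpa using h
        · intro b hb
          have hb : (b : G ⧸ W) = t0 := by simpa using hb
          exact ⟨⟨t0⁻¹ * b, QuotientGroup.eq.1 hb.symm⟩, by simp⟩
      have := sum_inv V (fun t : G => (t : G ⧸ W) = s) (by
        intro v hv t
        constructor
        · intro h
          have h2 := hs v⁻¹ (V.inv_mem hv)
          rw [← h] at h2
          change ((v⁻¹ * (v * t) : G) : G ⧸ W) = _ at h2
          rw [inv_mul_cancel_left, h] at h2
          exact h2
        · intro h
          have h2 := hs v hv
          rw [← h] at h2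
          rw [← h]
          exact h2) M
      rw [hc] at this
      rw [← this]
      refine Finset.sum_congr rfl fun f _ => ?_
      congr 1
      rw [eq_iff_iff]
      constructor
      · intro h v hv t
        exact congrFun (congrArg Prod.snd (h v hv)) t
      · intro h v hv
        refine Prod.ext (hs v hv) ?_
        funext t
        exact h v hv t
    · rw [if_neg hs]
      apply Finset.sum_eq_zero
      intro f _
      rw [if_neg]
      intro h
      apply hs
      rw [hfix]
      intro v hv
      exact congrArg Prod.fst (h v hv)
  trans ∑ s : G ⧸ W, if s ∈ fixedPoints V (G ⧸ W) then
        (∑ i, M i ^ Nat.card V) ^ (Nat.card W / Nat.card V) else 0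
  · rw [← Finset.sum_filter, Finset.sum_const,
      nsmul_eq_mul, Nat.card_eq_fintype_card, Fintype.card_subtype]
  · refine Finset.sum_congr rfl fun s _ => ?_
    rw [← inner s]
    congr!

open MvPolynomial in
lemma approx {σ : Type*} (n : ℕ) (hn : 0 < n) (x : MvPolynomial σ ℤ) :
    ∃ (I : Type) (_ : Fintype I) (m : I → (σ →₀ ℕ)),
      (n : MvPolynomial σ ℤ) ∣ x - ∑ i, monomial (m i) (1 : ℤ) := by
  induction x using MvPolynomial.induction_on' with
  | monomial u a =>
    refine ⟨Fin (a % n).toNat, inferInstance, fun _ => u, ?_⟩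
    have h0 : 0 ≤ a % n := Int.emod_nonneg _ (by omega)
    rw [Finset.sum_const, Finset.card_univ, Fintype.card_fin, ← map_nsmul, ← map_sub,
      nsmul_eq_mul, mul_one, Int.toNat_of_nonneg h0]
    refine ⟨monomial u (a / n), ?_⟩
    have : ((n : MvPolynomial σ ℤ)) = C (n : ℤ) := by simp
    rw [this, C_mul_monomial]
    congr 1
    have := Int.mul_ediv_add_emod a n
    linarith
  | add p q hp hq =>
    obtain ⟨I, _, m, h⟩ := hp
    obtain ⟨J, _, k, h'⟩ := hq
    refine ⟨I ⊕ J, inferInstance, Sum.elim m k, ?_⟩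
    rw [Fintype.sum_sum_type]
    simp only [Sum.elim_inl, Sum.elim_inr]
    rw [add_sub_add_comm]
    exact dvd_add h h'

open MvPolynomial in
lemma good_term {σ : Type*} (W : Subgroup G) (x : MvPolynomial σ ℤ) :
    Good (fun V : Subgroup G => (Nat.card (fixedPoints V (G ⧸ W)) : MvPolynomial σ ℤ) *
      (expand (Nat.card V) x) ^ (Nat.card W / Nat.card V)) := by
  intro U
  obtain ⟨I, _, m, h⟩ := approx (Nat.card (Subgroup.normalizer (U : Set G))) Nat.card_pos x
  have h1 := good_norm W m U
  refine (dvd_iff_dvd_of_dvd_sub ?_).2 h1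
  rw [← Finset.sum_sub_distrib]
  apply Finset.dvd_sum
  intro g _
  simp only
  rw [← mul_sub]
  apply Dvd.dvd.mul_left
  refine dvd_trans ?_ (sub_dvd_pow_sub_pow _ _ _)
  rw [← map_sub]
  have := map_dvd (expand (R := ℤ) (σ := σ) (Nat.card ↥(U ⊔ Subgroup.zpowers (g : G)))) h
  rwa [map_natCast] at this


noncomputable def mk (U : Subgroup G) (C : SubgroupConjClasses G) : ℕ :=
  Nat.card (fixedPoints U (G ⧸ (Quotient.out C : Subgroup G)))

lemma subconj_of_fixed (U V : Subgroup G) (s : G ⧸ V) (hs : s ∈ fixedPoints U (G ⧸ V)) :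
    Subconj U V := by
  obtain ⟨t, rfl⟩ := QuotientGroup.mk_surjective s
  refine ⟨ConjAct.toConjAct t, fun u hu => ?_⟩
  rw [Subgroup.mem_pointwise_smul_iff_inv_smul_mem, ConjAct.smul_def]
  have h := hs ⟨u, hu⟩
  change ((u * t : G) : G ⧸ V) = t at h
  have h' := QuotientGroup.eq.1 h.symm
  simpa [mul_assoc] using h'

lemma subconj_of_mk {U : Subgroup G} {C : SubgroupConjClasses G} (h : mk U C ≠ 0) :
    Subconj U (Quotient.out C) := by
  have : Nonempty (fixedPoints U (G ⧸ (Quotient.out C : Subgroup G))) := by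
    by_contra hne
    rw [not_nonempty_iff] at hne
    exact h (by rw [mk, Nat.card_of_isEmpty])
  obtain ⟨s, hs⟩ := this
  exact subconj_of_fixed _ _ s hs

lemma card_smul' (g : ConjAct G) (V : Subgroup G) :
    Nat.card (g • V : Subgroup G) = Nat.card V :=
  (Nat.card_congr (Subgroup.equivSMul g V).toEquiv).symm

lemma dvd_of_mk {U : Subgroup G} {C : SubgroupConjClasses G} (h : mk U C ≠ 0) :
    Nat.card U ∣ Nat.card (Quotient.out C : Subgroup G) := by
  obtain ⟨g, hg⟩ := subconj_of_mk h
  rw [← card_smul' g (Quotient.out C)]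
  exact Subgroup.card_dvd_of_le hg

lemma eq_of_mk {U : Subgroup G} {C : SubgroupConjClasses G} (h : mk U C ≠ 0)
    (hc : Nat.card (Quotient.out C : Subgroup G) ≤ Nat.card U) :
    (Quotient.mk _ U : SubgroupConjClasses G) = C := by
  obtain ⟨g, hg⟩ := subconj_of_mk h
  have : U = g • (Quotient.out C : Subgroup G) :=
    Subgroup.eq_of_le_of_card_ge hg (by rw [card_smul']; exact hc)
  conv_rhs => rw [← Quotient.out_eq C]
  apply Quotient.sound
  exact ⟨g, this.symm⟩

lemma mk_conj (g : ConjAct G) (U : Subgroup G) (C : SubgroupConjClasses G) :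
    mk (g • U) C = mk U C := by
  unfold mk
  set V : Subgroup G := Quotient.out C
  set t : G := ConjAct.ofConjAct g with ht
  symm
  refine Nat.card_congr (Equiv.subtypeEquiv (MulAction.toPerm t) ?_)
  intro s
  constructor
  · intro hs
    rintro ⟨u, hu⟩
    rw [Subgroup.mem_pointwise_smul_iff_inv_smul_mem, ConjAct.smul_def] at hu
    have h := hs ⟨_, hu⟩
    change (t⁻¹ * u * t⁻¹⁻¹) • s = s at h
    change u • t • s = t • s
    rw [inv_inv] at h
    rw [mul_smul, mul_smul, inv_smul_eq_iff] at h
    exact h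
  · intro hs
    rintro ⟨u, hu⟩
    have h := hs ⟨t * u * t⁻¹, by
      rw [Subgroup.mem_pointwise_smul_iff_inv_smul_mem, ConjAct.smul_def]
      change t⁻¹ * (t * u * t⁻¹) * t⁻¹⁻¹ ∈ U
      simpa [mul_assoc] using hu⟩
    change (t * u * t⁻¹) • t • s = t • s at h
    change u • s = s
    rw [← mul_smul, inv_mul_cancel_right, mul_smul] at h
    exact (smul_left_cancel_iff t).1 h

lemma mk_self (C : SubgroupConjClasses G) :
    mk (Quotient.out C) C * Nat.card (Quotient.out C : Subgroup G) =
      Nat.card (Subgroup.normalizer ((Quotient.out C : Subgroup G) : Set G)) := by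
  unfold mk
  set V : Subgroup G := Quotient.out C
  rw [Nat.card_congr (Sylow.fixedPointsMulLeftCosetsEquivQuotient V),
    Subgroup.card_eq_card_quotient_mul_card_subgroup (Subgroup.comap (Subgroup.normalizer (V : Set G)).subtype V)]
  congr 1
  exact Nat.card_congr (Subgroup.subgroupOfEquivOfLe (Subgroup.le_normalizer (H := V))).symm.toEquiv

lemma mk_self_pos (C : SubgroupConjClasses G) : mk (Quotient.out C) C ≠ 0 := by
  intro h
  have := mk_self C
  rw [h, zero_mul] at this
  exact Nat.card_pos.ne this

section
variable {R : Type*} [CommRing R]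

lemma ghost_eq (U : Subgroup G) (x : SubgroupConjClasses G → R) :
    ghost U x = ∑ C, (mk U C : R) *
      x C ^ (Nat.card (Quotient.out C : Subgroup G) / Nat.card U) := by
  unfold ghost
  rw [finsum_eq_sum_of_fintype]
  refine Finset.sum_congr rfl fun C _ => ?_
  split_ifs with h
  · rfl
  · have : mk U C = 0 := by
      by_contra h'
      exact h (subconj_of_mk h')
    rw [this]
    simp

lemma ghost_conj (g : ConjAct G) (U : Subgroup G) (x : SubgroupConjClasses G → R) :
    ghost (g • U) x = ghost U x := by
  simp only [ghost_eq, mk_conj, card_smul']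

lemma ghost_congr (U : Subgroup G) (x y : SubgroupConjClasses G → R)
    (h : ∀ C, Nat.card U ≤ Nat.card (Quotient.out C : Subgroup G) → x C = y C) :
    ghost U x = ghost U y := by
  simp only [ghost_eq]
  refine Finset.sum_congr rfl fun C _ => ?_
  by_cases hm : mk U C = 0
  · simp [hm]
  · rw [h C (Nat.le_of_dvd Nat.card_pos (dvd_of_mk hm))]

lemma ghost_sub (C : SubgroupConjClasses G) (x y : SubgroupConjClasses G → R)
    (h : ∀ C', Nat.card (Quotient.out C : Subgroup G) < Nat.card (Quotient.out C' : Subgroup G) →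
      x C' = y C') :
    ghost (Quotient.out C) x - ghost (Quotient.out C) y
      = (mk (Quotient.out C) C : R) * (x C - y C) := by
  simp only [ghost_eq]
  rw [← Finset.sum_sub_distrib, Finset.sum_eq_single C]
  · rw [Nat.div_self Nat.card_pos, pow_one, pow_one, mul_sub]
  · intro C' _ hne
    by_cases hm : mk (Quotient.out C) C' = 0
    · simp [hm]
    · rw [h C', sub_self]
      by_contra hlt
      have := eq_of_mk hm (not_lt.1 hlt)
      rw [Quotient.out_eq] at this
      exact hne this.symm
  · intro h
    exact absurd (Finset.mem_univ _) h

lemma ghost_map {R' : Type*} [CommRing R'] (h : R →+* R') (U : Subgroup G)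
    (x : SubgroupConjClasses G → R) : ghost U (fun C => h (x C)) = h (ghost U x) := by
  simp only [ghost_eq, map_sum, map_mul, map_pow, map_natCast]

end

section
open MvPolynomial
variable {σ : Type*}

lemma ghost_injective (x y : SubgroupConjClasses G → MvPolynomial σ ℤ)
    (h : ∀ U, ghost U x = ghost U y) : x = y := by
  by_contra hne
  have hex : (Finset.univ.filter (fun C => x C ≠ y C)).Nonempty := by
    obtain ⟨C, hC⟩ := Function.ne_iff.1 hne
    exact ⟨C, by simpa using hC⟩
  obtain ⟨C, hC, hmax⟩ := Finset.exists_max_image _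
    (fun C : SubgroupConjClasses G => Nat.card (Quotient.out C : Subgroup G)) hex
  have := ghost_sub C x y (by
    intro C' hlt
    by_contra hne'
    exact absurd (hmax C' (by simpa using hne')) (not_le.2 hlt))
  rw [h, sub_self] at this
  rcases mul_eq_zero.1 this.symm with h1 | h1
  · exact mk_self_pos C (by exact_mod_cast h1)
  · exact (Finset.mem_filter.1 hC).2 (sub_eq_zero.1 h1)

lemma good_ghost (x : SubgroupConjClasses G → MvPolynomial σ ℤ) :
    Good (fun V : Subgroup G => expand (Nat.card V) (ghost V x)) := by
  simp only [ghost_eq, map_sum, map_mul, map_pow, map_natCast]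
  exact Good.sum _ fun C _ => good_term _ (x C)

lemma dvd_of_dvd_expand (n p : ℕ) (hp : p ≠ 0) (f : MvPolynomial σ ℤ)
    (h : (n : MvPolynomial σ ℤ) ∣ expand p f) : (n : MvPolynomial σ ℤ) ∣ f := by
  have e : (n : MvPolynomial σ ℤ) = C (n : ℤ) := by simp
  rw [e, C_dvd_iff_dvd_coeff] at h ⊢
  intro i
  rw [← coeff_expand_smul p hp f i]
  exact h _

lemma key_dvd (a : Subgroup G → MvPolynomial σ ℤ)
    (ha : Good (fun V : Subgroup G => expand (Nat.card V) (a V)))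
    (C : SubgroupConjClasses G)
    (h : ∀ V : Subgroup G, Nat.card (Quotient.out C : Subgroup G) < Nat.card V → a V = 0) :
    (mk (Quotient.out C) C : MvPolynomial σ ℤ) ∣ a (Quotient.out C) := by
  have h1 := ha (Quotient.out C)
  have h2 := mk_self C
  have h3 := mk_self_pos C
  set U : Subgroup G := Quotient.out C
  apply dvd_of_dvd_expand _ (Nat.card U) Nat.card_pos.ne'
  have hs : ∑ g : Subgroup.normalizer (U : Set G),
      expand (Nat.card ↥(U ⊔ Subgroup.zpowers (g : G))) (a (U ⊔ Subgroup.zpowers (g : G)))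
      = (Nat.card U : MvPolynomial σ ℤ) * expand (Nat.card U) (a U) := by
    have : ∀ g : Subgroup.normalizer (U : Set G),
      expand (Nat.card ↥(U ⊔ Subgroup.zpowers (g : G))) (a (U ⊔ Subgroup.zpowers (g : G)))
      = if (g : G) ∈ U then expand (Nat.card U) (a U) else 0 := by
      intro g
      split_ifs with hg
      · rw [sup_eq_left.2 (Subgroup.zpowers_le.2 hg)]
      · rw [h, map_zero]
        by_contra hlt
        have := Subgroup.eq_of_le_of_card_ge (le_sup_left : U ≤ U ⊔ Subgroup.zpowers (g : G))
          (not_lt.1 hlt)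
        have h5 : (g : G) ∈ U ⊔ Subgroup.zpowers (g : G) :=
          (le_sup_right : Subgroup.zpowers (g : G) ≤ _) (Subgroup.mem_zpowers _)
        exact hg (this.symm.le h5)
    rw [Finset.sum_congr rfl (fun g _ => this g), ← Finset.sum_filter, Finset.sum_const,
      nsmul_eq_mul]
    congr 2
    rw [← Fintype.card_subtype, ← Nat.card_eq_fintype_card]
    exact Nat.card_congr (Subgroup.subgroupOfEquivOfLe (Subgroup.le_normalizer (H := U))).toEquiv
  rw [hs, ← h2, mul_comm, Nat.cast_mul, mul_comm, mul_comm (mk U C : MvPolynomial σ ℤ)] at h1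
  have h4 : (Nat.card U : MvPolynomial σ ℤ) ≠ 0 := by
    exact_mod_cast (Nat.card_pos (α := U)).ne'
  exact (mul_dvd_mul_iff_left h4).1 h1

theorem solve (a : Subgroup G → MvPolynomial σ ℤ)
    (ha : Good (fun V : Subgroup G => expand (Nat.card V) (a V)))
    (hc : ∀ (g : ConjAct G) (U : Subgroup G), a (g • U) = a U) :
    ∃ x : SubgroupConjClasses G → MvPolynomial σ ℤ, ∀ U, ghost U x = a U := by
  have main : ∀ k : ℕ, ∃ x : SubgroupConjClasses G → MvPolynomial σ ℤ,
      ∀ U : Subgroup G, Nat.card G < Nat.card U + k → ghost U x = a U := by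
    intro k
    induction k with
    | zero =>
      refine ⟨0, fun U hU => ?_⟩
      have := Subgroup.card_le_card_group U
      omega
    | succ k ih =>
      obtain ⟨x, hx⟩ := ih
      set x0 : SubgroupConjClasses G → MvPolynomial σ ℤ := fun C =>
        if Nat.card G < Nat.card (Quotient.out C : Subgroup G) + k then x C else 0 with hx0
      have h0 : ∀ U : Subgroup G, Nat.card G < Nat.card U + k → ghost U x0 = a U := by
        intro U hU
        rw [← hx U hU]
        apply ghost_congr
        intro C hC
        simp only [hx0]
        rw [if_pos (by omega)]
      have key : ∀ C : SubgroupConjClasses G, ∃ c : MvPolynomial σ ℤ,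
          Nat.card (Quotient.out C : Subgroup G) + k = Nat.card G →
          a (Quotient.out C) - ghost (Quotient.out C) x0 = (mk (Quotient.out C) C) * c := by
        intro C
        by_cases hC : Nat.card (Quotient.out C : Subgroup G) + k = Nat.card G
        · have hg : Good (fun V : Subgroup G => expand (Nat.card V) (a V - ghost V x0)) := by
            have h := ha.add (good_ghost x0).neg
            simp only [← sub_eq_add_neg, ← map_sub] at h
            exact h
          obtain ⟨c, h⟩ := key_dvd _ hg C (by
            intro V hV
            rw [h0 V (by omega), sub_self])
          exact ⟨c, fun _ => h⟩
        · exact ⟨0, fun h => absurd h hC⟩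
      choose c hcc using key
      set x' : SubgroupConjClasses G → MvPolynomial σ ℤ := fun C =>
        if Nat.card (Quotient.out C : Subgroup G) + k = Nat.card G then c C else x0 C with hx'
      refine ⟨x', fun U hU => ?_⟩
      by_cases hlt : Nat.card G < Nat.card U + k
      · rw [← h0 U hlt]
        apply ghost_congr
        intro C hC
        simp only [hx']
        rw [if_neg (by omega)]
      · set C : SubgroupConjClasses G := Quotient.mk _ U with hCdef
        have hrel : ∃ g : ConjAct G, g • (Quotient.out C : Subgroup G) = U := by
          have : (Quotient.mk _ U : SubgroupConjClasses G) = Quotient.mk _ (Quotient.out C) := by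
            rw [Quotient.out_eq]
          exact Quotient.exact this
        obtain ⟨g, hg⟩ := hrel
        have hcard : Nat.card (Quotient.out C : Subgroup G) = Nat.card U := by
          rw [← hg, card_smul']
        rw [← hg, ghost_conj, hc]
        have hk : Nat.card (Quotient.out C : Subgroup G) + k = Nat.card G := by omega
        have h1 := ghost_sub C x' x0 (by
          intro C' hC'
          simp only [hx']
          rw [if_neg (by omega)])
        have h2 : x' C = c C := by simp only [hx']; rw [if_pos hk]
        have h3 : x0 C = 0 := by simp only [hx0]; rw [if_neg (by omega)]
        rw [h2, h3, sub_zero, ← hcc C hk] at h1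
        exact sub_left_inj.1 h1
  obtain ⟨x, hx⟩ := main (Nat.card G)
  refine ⟨x, fun U => hx U ?_⟩
  have : 0 < Nat.card U := Nat.card_pos
  omega

lemma good_mul (s t : SubgroupConjClasses G → σ) :
    Good (fun V : Subgroup G => expand (Nat.card V)
      (ghost V (fun C => (X (s C) : MvPolynomial σ ℤ)) * ghost V (fun C => (X (t C) : MvPolynomial σ ℤ)))) := by
  have e : ∀ (V : Subgroup G) (r : SubgroupConjClasses G → σ),
      expand (Nat.card V) (ghost V (fun C => (X (r C) : MvPolynomial σ ℤ)))
      = ∑ C, (mk V C : MvPolynomial σ ℤ) * X (r C) ^ Nat.card (Quotient.out C : Subgroup G) := by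
    intro V r
    simp only [ghost_eq, map_sum, map_mul, map_pow, map_natCast, expand_X]
    refine Finset.sum_congr rfl fun C _ => ?_
    by_cases hm : mk V C = 0
    · simp [hm]
    · rw [← pow_mul, Nat.mul_div_cancel' (dvd_of_mk hm)]
  simp only [map_mul, e, Finset.sum_mul_sum]
  refine Good.sum _ fun C _ => Good.sum _ fun D _ => ?_
  have h := (good_card (G := G) ((G ⧸ (Quotient.out C : Subgroup G)) ×
    (G ⧸ (Quotient.out D : Subgroup G))) (MvPolynomial σ ℤ)).mul_const
    (X (s C) ^ Nat.card (Quotient.out C : Subgroup G) *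
      X (t D) ^ Nat.card (Quotient.out D : Subgroup G))
  convert h using 2 with V
  rw [mul_mul_mul_comm]
  congr 1
  rw [← Nat.cast_mul]
  congr 1
  unfold mk
  rw [← Nat.card_prod]
  refine Nat.card_congr ⟨fun p => ⟨(p.1, p.2), fun v => Prod.ext (p.1.2 v) (p.2.2 v)⟩,
    fun p => (⟨p.1.1, fun v => congrArg Prod.fst (p.2 v)⟩,
      ⟨p.1.2, fun v => congrArg Prod.snd (p.2 v)⟩), fun _ => rfl, fun _ => rfl⟩

lemma good_one : Good (fun V : Subgroup G => expand (Nat.card V) (1 : MvPolynomial σ ℤ)) := by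
  have : Subsingleton (G ⧸ (⊤ : Subgroup G)) := QuotientGroup.subsingleton_quotient_top
  have h := good_of_set (G := G) (Y := G ⧸ (⊤ : Subgroup G)) (fun _ => (1 : MvPolynomial σ ℤ))
    (fun _ _ => rfl)
  convert h using 2 with V
  rw [map_one, Fintype.sum_eq_single ((1 : G) : G ⧸ (⊤ : Subgroup G))]
  · rw [if_pos]
    intro v _
    exact Subsingleton.elim _ _
  · intro y hy
    exact absurd (Subsingleton.elim _ _) hy

end

section
open MvPolynomial

lemma exists_add : ∃ S : SubgroupConjClasses G →
      MvPolynomial (SubgroupConjClasses G ⊕ SubgroupConjClasses G) ℤ,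
    ∀ U : Subgroup G, ghost U S = ghost U (fun C => X (Sum.inl C)) +
      ghost U (fun C => X (Sum.inr C)) := by
  apply solve
  · have h := (good_ghost (G := G) (fun C =>
      (X (Sum.inl C) : MvPolynomial (SubgroupConjClasses G ⊕ SubgroupConjClasses G) ℤ))).add
      (good_ghost (fun C => X (Sum.inr C)))
    simp only [← map_add] at h
    exact h
  · intro g U
    simp only [ghost_conj]

lemma exists_mul : ∃ S : SubgroupConjClasses G →
      MvPolynomial (SubgroupConjClasses G ⊕ SubgroupConjClasses G) ℤ,
    ∀ U : Subgroup G, ghost U S = ghost U (fun C => X (Sum.inl C)) *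
      ghost U (fun C => X (Sum.inr C)) := by
  apply solve
  · exact good_mul _ _
  · intro g U
    simp only [ghost_conj]

lemma exists_neg : ∃ S : SubgroupConjClasses G → MvPolynomial (SubgroupConjClasses G) ℤ,
    ∀ U : Subgroup G, ghost U S = - ghost U (fun C => X C) := by
  apply solve
  · have h := (good_ghost (G := G) (fun C =>
      (X C : MvPolynomial (SubgroupConjClasses G) ℤ))).neg
    simp only [← map_neg] at h
    exact h
  · intro g U
    simp only [ghost_conj]

lemma exists_one : ∃ S : SubgroupConjClasses G → MvPolynomial Empty ℤ,
    ∀ U : Subgroup G, ghost U S = 1 :=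
  solve _ good_one (fun _ _ => rfl)

variable {R : Type*} [CommRing R]

noncomputable def wadd (x y : SubgroupConjClasses G → R) : SubgroupConjClasses G → R :=
  fun C => aeval (Sum.elim x y) (exists_add.choose C)

noncomputable def wmul (x y : SubgroupConjClasses G → R) : SubgroupConjClasses G → R :=
  fun C => aeval (Sum.elim x y) (exists_mul.choose C)

noncomputable def wneg (x : SubgroupConjClasses G → R) : SubgroupConjClasses G → R :=
  fun C => aeval x (exists_neg.choose C)

noncomputable def wone : SubgroupConjClasses G → R :=
  fun C => aeval (fun e : Empty => e.elim) (exists_one.choose C)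

def wzero : SubgroupConjClasses G → R := fun _ => 0

lemma ghost_aeval {σ : Type*} (e : σ → R) (U : Subgroup G)
    (x : SubgroupConjClasses G → MvPolynomial σ ℤ) :
    ghost U (fun C => aeval e (x C)) = aeval e (ghost U x) :=
  ghost_map (aeval e : MvPolynomial σ ℤ →ₐ[ℤ] R).toRingHom U x

lemma ghost_wadd (U : Subgroup G) (x y : SubgroupConjClasses G → R) :
    ghost U (wadd x y) = ghost U x + ghost U y := by
  unfold wadd
  rw [ghost_aeval, exists_add.choose_spec U, map_add, ← ghost_aeval, ← ghost_aeval]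
  simp only [aeval_X, Sum.elim_inl, Sum.elim_inr]

lemma ghost_wmul (U : Subgroup G) (x y : SubgroupConjClasses G → R) :
    ghost U (wmul x y) = ghost U x * ghost U y := by
  unfold wmul
  rw [ghost_aeval, exists_mul.choose_spec U, map_mul, ← ghost_aeval, ← ghost_aeval]
  simp only [aeval_X, Sum.elim_inl, Sum.elim_inr]

lemma ghost_wneg (U : Subgroup G) (x : SubgroupConjClasses G → R) :
    ghost U (wneg x) = - ghost U x := by
  unfold wneg
  rw [ghost_aeval, exists_neg.choose_spec U, map_neg, ← ghost_aeval]
  simp only [aeval_X]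

lemma ghost_wone (U : Subgroup G) :
    ghost U (wone : SubgroupConjClasses G → R) = 1 := by
  unfold wone
  rw [ghost_aeval, exists_one.choose_spec U, map_one]

lemma ghost_wzero (U : Subgroup G) :
    ghost U (wzero : SubgroupConjClasses G → R) = 0 := by
  rw [ghost_eq]
  apply Finset.sum_eq_zero
  intro C _
  by_cases hm : mk U C = 0
  · simp [hm]
  · have h1 := Nat.div_pos (Nat.le_of_dvd Nat.card_pos (dvd_of_mk hm)) (Nat.card_pos (α := U))
    rw [wzero, zero_pow h1.ne', mul_zero]

variable {R' : Type*} [CommRing R'] (h : R →+* R')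

lemma map_aeval' {σ : Type*} (e : σ → R) (p : MvPolynomial σ ℤ) :
    h (aeval e p) = aeval (h ∘ e) p :=
  comp_aeval_apply (φ := h.toIntAlgHom) e p

lemma map_wadd (x y : SubgroupConjClasses G → R) :
    h ∘ wadd x y = wadd (h ∘ x) (h ∘ y) := by
  funext C
  simp only [wadd, Function.comp_apply, map_aeval', Sum.comp_elim]

lemma map_wmul (x y : SubgroupConjClasses G → R) :
    h ∘ wmul x y = wmul (h ∘ x) (h ∘ y) := by
  funext C
  simp only [wmul, Function.comp_apply, map_aeval', Sum.comp_elim]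

lemma map_wneg (x : SubgroupConjClasses G → R) :
    h ∘ wneg x = wneg (h ∘ x) := by
  funext C
  simp only [wneg, Function.comp_apply, map_aeval']

lemma map_wone : h ∘ (wone : SubgroupConjClasses G → R) = wone := by
  funext C
  simp only [wone, Function.comp_apply, map_aeval']
  congr 2
  funext e
  exact e.elim

lemma map_wzero : h ∘ (wzero : SubgroupConjClasses G → R) = wzero := by
  funext C
  simp [wzero]

lemma exists_lift (x : SubgroupConjClasses G → R) :
    ∃ y : SubgroupConjClasses G → MvPolynomial R ℤ,
      x = (aeval (id : R → R) : MvPolynomial R ℤ →ₐ[ℤ] R).toRingHom ∘ y :=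
  ⟨fun C => X (x C), by funext C; simp⟩

/-- The ring structure on Witt vectors. -/
@[reducible] noncomputable def wittRing (G : Type*) [Group G] [Fintype G] (R : Type*) [CommRing R] :
    CommRing (WittVec G R) :=
  letI : Add (WittVec G R) := ⟨wadd⟩
  letI : Mul (WittVec G R) := ⟨wmul⟩
  letI : Neg (WittVec G R) := ⟨wneg⟩
  letI : Zero (WittVec G R) := ⟨wzero⟩
  letI : One (WittVec G R) := ⟨wone⟩
  CommRing.ofMinimalAxioms
    (by
      intro x y z
      change wadd (wadd x y) z = wadd x (wadd y z)
      obtain ⟨x, rfl⟩ := exists_lift x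
      obtain ⟨y, rfl⟩ := exists_lift y
      obtain ⟨z, rfl⟩ := exists_lift z
      simp only [← map_wadd]
      congr 1
      apply ghost_injective
      intro U
      simp only [ghost_wadd]
      ring)
    (by
      intro x
      change wadd wzero x = x
      obtain ⟨x, rfl⟩ := exists_lift x
      rw [← map_wzero (aeval (id : R → R) : MvPolynomial R ℤ →ₐ[ℤ] R).toRingHom]
      simp only [← map_wadd]
      congr 1
      apply ghost_injective
      intro U
      simp only [ghost_wadd, ghost_wzero]
      ring)
    (by
      intro x
      change wadd (wneg x) x = wzero
      obtain ⟨x, rfl⟩ := exists_lift x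
      rw [← map_wzero (aeval (id : R → R) : MvPolynomial R ℤ →ₐ[ℤ] R).toRingHom]
      simp only [← map_wadd, ← map_wneg]
      congr 1
      apply ghost_injective
      intro U
      simp only [ghost_wadd, ghost_wzero, ghost_wneg]
      ring)
    (by
      intro x y z
      change wmul (wmul x y) z = wmul x (wmul y z)
      obtain ⟨x, rfl⟩ := exists_lift x
      obtain ⟨y, rfl⟩ := exists_lift y
      obtain ⟨z, rfl⟩ := exists_lift z
      simp only [← map_wmul]
      congr 1
      apply ghost_injective
      intro U
      simp only [ghost_wmul]
      ring)
    (by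
      intro x y
      change wmul x y = wmul y x
      obtain ⟨x, rfl⟩ := exists_lift x
      obtain ⟨y, rfl⟩ := exists_lift y
      simp only [← map_wmul]
      congr 1
      apply ghost_injective
      intro U
      simp only [ghost_wmul]
      ring)
    (by
      intro x
      change wmul wone x = x
      obtain ⟨x, rfl⟩ := exists_lift x
      rw [← map_wone (aeval (id : R → R) : MvPolynomial R ℤ →ₐ[ℤ] R).toRingHom]
      simp only [← map_wmul]
      congr 1
      apply ghost_injective
      intro U
      simp only [ghost_wmul, ghost_wone]
      ring)
    (by
      intro x y z
      change wmul x (wadd y z) = wadd (wmul x y) (wmul x z)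
      obtain ⟨x, rfl⟩ := exists_lift x
      obtain ⟨y, rfl⟩ := exists_lift y
      obtain ⟨z, rfl⟩ := exists_lift z
      simp only [← map_wmul, ← map_wadd]
      congr 1
      apply ghost_injective
      intro U
      simp only [ghost_wmul, ghost_wadd]
      ring)

end

end DS

/-- **Existence part of the theorem of Dress and Siebeneicher.**  For every finite
group `G` there is an assignment, to each commutative ring `R`, of a commutative
ring structure on the set `W_G(R)` of functions from conjugacy classes of subgroups
of `G` to `R`, such that (a) for every ring homomorphism `h : R → R'` the map
`x ↦ h ∘ x` is a ring homomorphism `W_G(R) → W_G(R')`, and (b) for every subgroup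
`U ≤ G` the ghost map `φ_U : W_G(R) → R` is a ring homomorphism. -/
theorem witt_vectors_exist (G : Type u) [Group G] [Fintype G] :
    ∃ W : ∀ (R : Type u) [CommRing R], CommRing (WittVec G R),
      (∀ (R R' : Type u) [CommRing R] [CommRing R'] (h : R →+* R'),
        letI := W R
        letI := W R'
        ∃ f : WittVec G R →+* WittVec G R', ∀ x : WittVec G R, f x = h ∘ x) ∧
      (∀ (R : Type u) [CommRing R] (U : Subgroup G),
        letI := W R
        ∃ f : WittVec G R →+* R, ∀ x : WittVec G R, f x = ghost U x) := by
  refine ⟨fun R _ => DS.wittRing G R, ?_, ?_⟩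
  · intro R R' _ _ h
    let _ := DS.wittRing G R
    let _ := DS.wittRing G R'
    exact ⟨{ toFun := fun x => h ∘ x
             map_one' := DS.map_wone h
             map_mul' := DS.map_wmul h
             map_zero' := DS.map_wzero h
             map_add' := DS.map_wadd h }, fun _ => rfl⟩
  · intro R _ U
    let _ := DS.wittRing G R
    exact ⟨{ toFun := fun x => ghost U x
             map_one' := DS.ghost_wone U
             map_mul' := DS.ghost_wmul U
             map_zero' := DS.ghost_wzero U
             map_add' := DS.ghost_wadd U }, fun _ => rfl⟩
end

section
/- Let G be a finite group. There exists a family (s_U), indexed by the conjugacy classes of subgroups U ≤ G, where s_U is a polynomial with integer coefficients in the variables a_V, b_V indexed by the conjugacy classes of subgroups V ≤ G with U subconjugate to V, such that for every commutative ring R, every subgroup H ≤ G, and all x = (x_V)'_{V ≤ G}, y = (y_V)'_{V ≤ G} ∈ W_G(R): φ_H(x) + φ_H(y) = φ_H((s_U(x_V, y_V | U ⪯ V ≤ G))'_{U ≤ G}). -/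
open MulAction Pointwise
open scoped Classical

theorem abs_span {K A B : Type*} [Fintype K] [AddCommGroup A] [AddCommGroup B]
    (r : K → ℕ) (S : K → AddSubgroup A) (e : K → A → B) (h0 : ∀ k, e k 0 = 0)
    (key : ∀ k, ∀ α ∈ S k, ∀ β ∈ S k, e k (α + β) - e k α - e k β ∈
      AddSubgroup.closure {b | ∃ j, r j < r k ∧ ∃ γ ∈ S j, b = e j γ}) 
    (m : B) (hm : m ∈ AddSubgroup.closure {b | ∃ j, ∃ γ ∈ S j, b = e j γ}) :
    ∃ z : K → A, (∀ k, z k ∈ S k) ∧ m = ∑ k, e k (z k) := by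
  have main : ∀ T : Finset K, (∀ k ∈ T, ∀ j, r j < r k → j ∈ T) →
      ∀ m ∈ AddSubgroup.closure {b | ∃ j ∈ T, ∃ γ ∈ S j, b = e j γ},
      ∃ z : K → A, (∀ k, z k ∈ S k) ∧ m = ∑ k ∈ T, e k (z k) := by
    intro T
    induction T using Finset.induction_on_max_value r with
    | empty =>
      intro _ m hm
      have : {b | ∃ j ∈ (∅ : Finset K), ∃ γ ∈ S j, b = e j γ} = ∅ := by ext; simp
      rw [this, AddSubgroup.closure_empty, AddSubgroup.mem_bot] at hm
      exact ⟨0, fun k => (S k).zero_mem, by simp [hm]⟩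
    | insert a s ha hmax ih =>
      intro hT m hm
      have hs : ∀ k ∈ s, ∀ j, r j < r k → j ∈ s := by
        intro k hk j hj
        have := hmax k hk
        rcases Finset.mem_insert.1 (hT k (Finset.mem_insert_of_mem hk) j hj) with h | h
        · subst h; omega
        · exact h
      have key' : ∀ α ∈ S a, ∀ β ∈ S a, e a (α + β) - e a α - e a β ∈
          AddSubgroup.closure {b | ∃ j ∈ s, ∃ γ ∈ S j, b = e j γ} := by
        intro α hα β hβ
        refine AddSubgroup.closure_mono ?_ (key a α hα β hβ)
        rintro b ⟨j, hj, γ, hγ, rfl⟩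
        refine ⟨j, ?_, γ, hγ, rfl⟩
        rcases Finset.mem_insert.1 (hT a (Finset.mem_insert_self _ _) j hj) with h | h
        · subst h; omega
        · exact h
      have : ∃ γ ∈ S a, m - e a γ ∈ AddSubgroup.closure {b | ∃ j ∈ s, ∃ γ ∈ S j, b = e j γ} := by
        induction hm using AddSubgroup.closure_induction with
        | mem x hx =>
          obtain ⟨j, hj, γ, hγ, rfl⟩ := hx
          rcases Finset.mem_insert.1 hj with h | h
          · subst h
            exact ⟨γ, hγ, by simp⟩
          · exact ⟨0, (S a).zero_mem, by
              rw [h0, sub_zero]; exact AddSubgroup.subset_closure ⟨j, h, γ, hγ, rfl⟩⟩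
        | zero => exact ⟨0, (S a).zero_mem, by simp [h0]⟩
        | add x y _ _ hx hy =>
          obtain ⟨γ, hγ, h1⟩ := hx
          obtain ⟨δ, hδ, h2⟩ := hy
          refine ⟨γ + δ, add_mem hγ hδ, ?_⟩
          have := sub_mem (add_mem h1 h2) (key' γ hγ δ hδ)
          convert this using 1
          abel
        | neg x _ hx =>
          obtain ⟨γ, hγ, h1⟩ := hx
          refine ⟨-γ, neg_mem hγ, ?_⟩
          have := add_mem (neg_mem h1) (key' γ hγ (-γ) (neg_mem hγ))
          rw [add_neg_cancel, h0] at this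
          convert this using 1
          abel
      obtain ⟨γ, hγ, h1⟩ := this
      obtain ⟨z, hz, h2⟩ := ih hs _ h1
      refine ⟨Function.update z a γ, ?_, ?_⟩
      · intro k
        by_cases hk : k = a
        · subst hk; simpa using hγ
        · simpa [hk] using hz k
      · rw [Finset.sum_insert ha, Function.update_self, ← sub_eq_iff_eq_add', h2]
        refine Finset.sum_congr rfl fun k hk => ?_
        rw [Function.update_of_ne (by rintro rfl; exact ha hk)]
  obtain ⟨z, hz, h⟩ := main Finset.univ (by simp) m (by simpa using hm)
  exact ⟨z, hz, h⟩

section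
set_option linter.unusedSectionVars false
variable {G : Type*} [Group G] [Fintype G]

/-- left translate invariance -/
def LInv (U : Subgroup G) (s : Finset G) : Prop := ∀ u ∈ U, ∀ g ∈ s, u * g ∈ s

abbrev RQ (U : Subgroup G) := Quotient (QuotientGroup.rightRel U)

noncomputable def rq (U : Subgroup G) (g : G) : RQ U := Quotient.mk _ g

theorem rq_eq (U : Subgroup G) (g h : G) : rq U g = rq U h ↔ ∃ u ∈ U, g = u * h := by
  unfold rq
  rw [Quotient.eq, QuotientGroup.rightRel_apply]
  constructor
  · intro hh
    exact ⟨g * h⁻¹, by simpa using inv_mem hh, by simp⟩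
  · rintro ⟨u, hu, rfl⟩
    simpa using hu

theorem card_inv (U : Subgroup G) (s : Finset G) (hs : LInv U s) :
    s.card = Nat.card U * (s.image (rq U)).card := by
  rw [Finset.card_eq_sum_card_image (rq U) s]
  rw [Finset.sum_const_nat (m := Nat.card U), mul_comm]
  intro q hq
  obtain ⟨h, hh, rfl⟩ := Finset.mem_image.1 hq
  have : (s.filter fun x => rq U x = rq U h) =
      (Finset.univ : Finset U).image (fun u : U => (u : G) * h) := by
    ext x
    simp only [Finset.mem_filter, rq_eq, Finset.mem_image, Finset.mem_univ, true_and]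
    constructor
    · rintro ⟨_, u, hu, rfl⟩; exact ⟨⟨u, hu⟩, rfl⟩
    · rintro ⟨u, rfl⟩; exact ⟨hs u u.2 h hh, u, u.2, rfl⟩
  rw [this, Finset.card_image_of_injective]
  · simp
  · intro u v huv
    simpa using huv

theorem sum_inv {A : Type*} [CommRing A] (α β : A) (U : Subgroup G) (c : Finset G)
    (hc : LInv U c) :
    ∑ s ∈ c.powerset.filter (LInv U), α ^ (s.card / Nat.card U) * β ^ ((c.card - s.card) / Nat.card U)
      = (α + β) ^ (c.card / Nat.card U) := by
  have hU : 0 < Nat.card U := Nat.card_pos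
  have hcc : c.card / Nat.card U = (c.image (rq U)).card := by
    rw [card_inv U c hc, Nat.mul_div_cancel_left _ hU]
  rw [hcc, ← Finset.sum_pow_mul_eq_add_pow]
  refine Finset.sum_bij' (fun s _ => s.image (rq U)) 
    (fun t _ => c.filter (fun g => rq U g ∈ t)) ?_ ?_ ?_ ?_ ?_
  · intro s hs
    simp only [Finset.mem_filter, Finset.mem_powerset] at hs ⊢
    exact Finset.image_subset_image hs.1
  · intro t ht
    simp only [Finset.mem_filter, Finset.mem_powerset] at ht ⊢
    refine ⟨Finset.filter_subset _ _, ?_⟩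
    intro u hu g hg
    simp only [Finset.mem_filter] at hg ⊢
    refine ⟨hc u hu g hg.1, ?_⟩
    rw [(rq_eq U (u * g) g).2 ⟨u, hu, rfl⟩]
    exact hg.2
  · intro s hs
    simp only [Finset.mem_filter, Finset.mem_powerset] at hs
    ext g
    simp only [Finset.mem_filter, Finset.mem_image]
    constructor
    · rintro ⟨_, h, hh, e⟩
      obtain ⟨u, hu, rfl⟩ := (rq_eq U g h).1 e.symm
      exact hs.2 u hu h hh
    · intro hg
      exact ⟨hs.1 hg, g, hg, rfl⟩
  · intro t ht
    simp only [Finset.mem_powerset] at ht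
    ext q
    simp only [Finset.mem_image, Finset.mem_filter]
    constructor
    · rintro ⟨g, ⟨_, h⟩, rfl⟩; exact h
    · intro hq
      obtain ⟨g, hg, rfl⟩ := Finset.mem_image.1 (ht hq)
      exact ⟨g, ⟨hg, hq⟩, rfl⟩
  · intro s hs
    simp only [Finset.mem_filter, Finset.mem_powerset] at hs
    rw [card_inv U c hc, card_inv U s hs.2, ← Nat.mul_sub, Nat.mul_div_cancel_left _ hU,
      Nat.mul_div_cancel_left _ hU]

/-- A single ghost summand. -/
noncomputable def eG {A : Type*} [CommRing A] (V : Subgroup G) (α : A) (U : Subgroup G) : A :=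
  (Nat.card (MulAction.fixedPoints U (G ⧸ V)) : A) * α ^ (Nat.card V / Nat.card U)

/-- The left coset as a finset. -/
noncomputable def cs (V : Subgroup G) (c : G ⧸ V) : Finset G :=
  Finset.univ.filter (fun g : G => (g : G ⧸ V) = c)

theorem mem_cs (V : Subgroup G) (c : G ⧸ V) (g : G) : g ∈ cs V c ↔ (g : G ⧸ V) = c := by
  simp [cs]

theorem card_cs (V : Subgroup G) (c : G ⧸ V) : (cs V c).card = Nat.card V := by
  obtain ⟨x, rfl⟩ := QuotientGroup.mk_surjective c
  have : cs V (x : G ⧸ V) = (Finset.univ : Finset V).image (fun v : V => x * (v : G)) := by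
    ext g
    rw [mem_cs, eq_comm, QuotientGroup.eq]
    simp only [Finset.mem_image, Finset.mem_univ, true_and]
    constructor
    · intro h; exact ⟨⟨_, h⟩, by simp⟩
    · rintro ⟨v, rfl⟩; simp
  rw [this, Finset.card_image_of_injective]
  · simp
  · intro u v huv
    simpa using huv

theorem fixed_of_subset (V U : Subgroup G) (c : G ⧸ V) (s : Finset G) (hne : s.Nonempty)
    (hsc : s ⊆ cs V c) (hs : LInv U s) : c ∈ MulAction.fixedPoints U (G ⧸ V) := by
  obtain ⟨g, hg⟩ := hne
  intro u
  have h1 := (mem_cs V c _).1 (hsc hg)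
  have h2 := (mem_cs V c _).1 (hsc (hs u u.2 g hg))
  rw [← h1]
  rw [← h1] at h2
  exact h2

theorem linv_cs (V U : Subgroup G) (c : G ⧸ V) (hc : c ∈ MulAction.fixedPoints U (G ⧸ V)) :
    LInv U (cs V c) := by
  intro u hu g hg
  rw [mem_cs] at hg ⊢
  have := hc ⟨u, hu⟩
  rw [← hg] at this ⊢
  exact this

theorem fixed_iff (V U : Subgroup G) (x : G) : 
    (x : G ⧸ V) ∈ MulAction.fixedPoints U (G ⧸ V) ↔ U ≤ ConjAct.toConjAct x • V := by
  constructor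
  · intro h u hu
    have h1 : ((u * x : G) : G ⧸ V) = x := h ⟨u, hu⟩
    rw [Subgroup.mem_pointwise_smul_iff_inv_smul_mem]
    rw [eq_comm, QuotientGroup.eq] at h1
    rw [← ConjAct.toConjAct_inv, ConjAct.toConjAct_smul]
    simpa [mul_assoc] using h1
  · intro h u
    have h1 := h u.2
    rw [Subgroup.mem_pointwise_smul_iff_inv_smul_mem, ← ConjAct.toConjAct_inv,
      ConjAct.toConjAct_smul] at h1
    change ((u * x : G) : G ⧸ V) = x
    rw [eq_comm, QuotientGroup.eq]
    simpa [mul_assoc] using h1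

theorem cs_nonempty (V : Subgroup G) (c : G ⧸ V) : (cs V c).Nonempty := by
  obtain ⟨x, rfl⟩ := QuotientGroup.mk_surjective c
  exact ⟨x, by simp [mem_cs]⟩

/-- Proper nonempty subsets of left cosets. -/
def XS (V : Subgroup G) (s : Finset G) : Prop := s.Nonempty ∧ ∃ c, s ⊂ cs V c

theorem key1 {A : Type*} [CommRing A] (V U : Subgroup G) (α β : A) :
    eG V (α + β) U - eG V α U - eG V β U =
      ∑ s ∈ (Finset.univ.filter (fun s : Finset G => XS V s ∧ LInv U s)),
        α ^ (s.card / Nat.card U) * β ^ ((Nat.card V - s.card) / Nat.card U) := by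
  set F : Finset (G ⧸ V) := Finset.univ.filter (fun c => c ∈ MulAction.fixedPoints U (G ⧸ V))
    with hF
  have hcard : Nat.card (MulAction.fixedPoints U (G ⧸ V)) = F.card := by
    rw [Nat.card_eq_fintype_card, hF, Fintype.card_subtype]
  have hX : (Finset.univ.filter (fun s : Finset G => XS V s ∧ LInv U s)) =
      F.biUnion (fun c => ((cs V c).powerset.filter (LInv U)) \ {∅, cs V c}) := by
    ext s
    simp only [Finset.mem_filter, Finset.mem_univ, true_and, Finset.mem_biUnion, Finset.mem_sdiff,
      Finset.mem_powerset, Finset.mem_insert, Finset.mem_singleton, hF, not_or]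
    constructor
    · rintro ⟨⟨hne, c, hc⟩, hi⟩
      exact ⟨c, fixed_of_subset V U c s hne hc.1 hi, ⟨hc.1, hi⟩, hne.ne_empty, hc.ne⟩
    · rintro ⟨c, hc, ⟨h1, h2⟩, h3, h4⟩
      exact ⟨⟨Finset.nonempty_iff_ne_empty.2 h3, c, lt_of_le_of_ne h1 h4⟩, h2⟩
  rw [hX, Finset.sum_biUnion]
  · have inner : ∀ c ∈ F, ∑ s ∈ ((cs V c).powerset.filter (LInv U)) \ {∅, cs V c},
        α ^ (s.card / Nat.card U) * β ^ ((Nat.card V - s.card) / Nat.card U) =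
        (α + β) ^ (Nat.card V / Nat.card U) - α ^ (Nat.card V / Nat.card U)
          - β ^ (Nat.card V / Nat.card U) := by
      intro c hc
      have hfix : c ∈ MulAction.fixedPoints U (G ⧸ V) := by simpa [hF] using hc
      have hi := linv_cs V U c hfix
      have h1 := sum_inv α β U (cs V c) hi
      rw [card_cs] at h1
      rw [← h1]
      have hsub : ({∅, cs V c} : Finset (Finset G)) ⊆ (cs V c).powerset.filter (LInv U) := by
        intro s hs
        simp only [Finset.mem_insert, Finset.mem_singleton] at hs
        rcases hs with rfl | rfl
        · simp [LInv]
        · simp [hi]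
      rw [← Finset.sum_sdiff hsub, Finset.sum_pair (cs_nonempty V c).ne_empty.symm, card_cs]
      simp
      ring
    rw [Finset.sum_congr rfl inner, Finset.sum_const, nsmul_eq_mul]
    unfold eG
    rw [hcard]
    ring
  · intro c _ d _ hcd
    simp only [Function.onFun]
    rw [Finset.disjoint_left]
    intro s hs ht
    simp only [Finset.mem_filter, Finset.mem_sdiff,
      Finset.mem_powerset, Finset.mem_insert, Finset.mem_singleton, not_or] at hs ht
    obtain ⟨g, hg⟩ := Finset.nonempty_iff_ne_empty.2 hs.2.1
    exact hcd (((mem_cs V c g).1 (hs.1.1 hg)).symm.trans ((mem_cs V d g).1 (ht.1.1 hg)))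

theorem linv_iff (U : Subgroup G) (s : Finset G) : LInv U s ↔ U ≤ stabilizer G s := by
  constructor
  · intro h u hu
    rw [mem_stabilizer_iff]
    refine Finset.eq_of_subset_of_card_le ?_ (by rw [Finset.card_smul_finset])
    intro g hg
    obtain ⟨t, ht, rfl⟩ := Finset.mem_smul_finset.1 hg
    exact h u hu t ht
  · intro h u hu g hg
    have := mem_stabilizer_iff.1 (h hu)
    rw [← this]
    exact Finset.mem_smul_finset.2 ⟨g, hg, rfl⟩

theorem smul_cs (V : Subgroup G) (g : G) (c : G ⧸ V) : g • cs V c = cs V (g • c) := by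
  refine Finset.eq_of_subset_of_card_le ?_ (by rw [Finset.card_smul_finset, card_cs, card_cs])
  intro x hx
  obtain ⟨t, ht, rfl⟩ := Finset.mem_smul_finset.1 hx
  rw [mem_cs] at ht ⊢
  rw [← ht]; rfl

theorem XS_smul (V : Subgroup G) (g : G) (s : Finset G) (h : XS V s) : XS V (g • s) := by
  obtain ⟨h1, c, h2⟩ := h
  refine ⟨h1.smul_finset, g • c, ?_⟩
  rw [← smul_cs]
  exact lt_of_le_of_ne (Finset.smul_finset_subset_smul_finset h2.1)
    (fun h => h2.ne (smul_left_cancel g h))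

theorem stab_props (V : Subgroup G) (s : Finset G) (h : XS V s) :
    Nat.card (stabilizer G s) < Nat.card V ∧ Nat.card (stabilizer G s) ∣ s.card ∧
    Nat.card (stabilizer G s) ∣ Nat.card V ∧ Subconj (stabilizer G s) V := by
  obtain ⟨h1, c, h2⟩ := h
  have hi := (linv_iff (stabilizer G s) s).2 le_rfl
  have hd := Dvd.intro _ (card_inv _ s hi).symm
  have hf := fixed_of_subset V _ c s h1 h2.1 hi
  refine ⟨?_, hd, ?_, ?_⟩
  · have := Finset.card_lt_card h2
    rw [card_cs] at this
    exact (Nat.le_of_dvd h1.card_pos hd).trans_lt this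
  · have := card_inv _ _ (linv_cs V _ c hf)
    rw [card_cs] at this
    exact Dvd.intro _ this.symm
  · obtain ⟨x, rfl⟩ := QuotientGroup.mk_surjective c
    exact ⟨_, (fixed_iff V _ x).1 hf⟩

theorem card_orb (U : Subgroup G) (r : Finset G) :
    Nat.card (MulAction.fixedPoints U (G ⧸ stabilizer G r)) =
      (Finset.univ.filter (fun s : Finset G => LInv U s ∧ s ∈ orbit G r)).card := by
  rw [Nat.card_eq_fintype_card, Fintype.card_subtype]
  refine Finset.card_bij (fun c _ => ofQuotientStabilizer G r c) ?_ ?_ ?_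
  · intro c hc
    simp only [Finset.mem_filter, Finset.mem_univ, true_and] at hc ⊢
    refine ⟨?_, ofQuotientStabilizer_mem_orbit G r c⟩
    rw [linv_iff]
    intro u hu
    rw [mem_stabilizer_iff, ← ofQuotientStabilizer_smul]
    congr 1
    exact hc ⟨u, hu⟩
  · intro a _ b _ h
    exact injective_ofQuotientStabilizer G r h
  · intro s hs
    simp only [Finset.mem_filter, Finset.mem_univ, true_and] at hs
    obtain ⟨hs, g, rfl⟩ := hs
    refine ⟨(g : G ⧸ stabilizer G r), ?_, rfl⟩
    simp only [Finset.mem_filter, Finset.mem_univ, true_and]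
    intro u
    apply injective_ofQuotientStabilizer G r
    have := mem_stabilizer_iff.1 ((linv_iff _ _).1 hs u.2)
    change ofQuotientStabilizer G r ((u : G) • (g : G ⧸ stabilizer G r)) = _
    rw [ofQuotientStabilizer_smul]
    exact this

theorem orb_sum {A : Type*} [CommRing A] (V U : Subgroup G) (α β : A) (r : Finset G)
    (hr : XS V r) :
    ∑ s ∈ (Finset.univ.filter (fun s : Finset G => LInv U s ∧ s ∈ orbit G r)),
        α ^ (s.card / Nat.card U) * β ^ ((Nat.card V - s.card) / Nat.card U) =
    eG (stabilizer G r) (α ^ (r.card / Nat.card (stabilizer G r)) *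
      β ^ ((Nat.card V - r.card) / Nat.card (stabilizer G r))) U := by
  unfold eG
  rw [card_orb, ← nsmul_eq_mul]
  refine Finset.sum_eq_card_nsmul ?_
  intro s hs
  simp only [Finset.mem_filter, Finset.mem_univ, true_and] at hs
  have hU : 0 < Nat.card U := Nat.card_pos
  have hW : 0 < Nat.card (stabilizer G r) := Nat.card_pos
  have hcs : s.card = r.card := by
    obtain ⟨_, g, rfl⟩ := hs
    exact Finset.card_smul_finset _ _
  have hst : Nat.card (stabilizer G s) = Nat.card (stabilizer G r) :=
    Nat.card_congr (stabilizerEquivStabilizerOfOrbitRel (orbitRel_apply.2 hs.2)).toEquiv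
  have hd : Nat.card U ∣ Nat.card (stabilizer G r) := by
    rw [← hst]
    exact Subgroup.card_dvd_of_le ((linv_iff _ _).1 hs.1)
  obtain ⟨_, h2, h3, _⟩ := stab_props V r hr
  have h4 := Nat.dvd_sub h3 h2
  rw [hcs, mul_pow, ← pow_mul, ← pow_mul, Nat.div_mul_div_comm h2 hd, Nat.div_mul_div_comm h4 hd,
    mul_comm r.card, mul_comm (Nat.card V - r.card), Nat.mul_div_mul_left _ _ hW,
    Nat.mul_div_mul_left _ _ hW]

theorem exists_rep (ω : orbitRel.Quotient G (Finset G)) :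
    ∃ r : Finset G, ∃ C : SubgroupConjClasses G, 
      (Quotient.mk _ r : orbitRel.Quotient G (Finset G)) = ω ∧ stabilizer G r = Quotient.out C := by
  obtain ⟨s, rfl⟩ := Quotient.exists_rep ω
  let C : SubgroupConjClasses G := Quotient.mk _ (stabilizer G s)
  have h : Quotient.out C ∈ orbit (ConjAct G) (stabilizer G s) :=
    orbitRel_apply.1 (Quotient.mk_out (s := orbitRel (ConjAct G) (Subgroup G)) (stabilizer G s))
  obtain ⟨g, hg⟩ := h
  refine ⟨ConjAct.ofConjAct g • s, C, ?_, ?_⟩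
  · exact Quotient.sound (orbitRel_apply.2 ⟨_, rfl⟩)
  · rw [← hg]
    ext x
    simp only [Subgroup.mem_pointwise_smul_iff_inv_smul_mem, mem_stabilizer_iff, ConjAct.smul_def,
      ConjAct.ofConjAct_inv, inv_inv, mul_smul]
    rw [inv_smul_eq_iff]

theorem key2 {A : Type*} [CommRing A] (V : Subgroup G) (α β : A) 
    (rep : orbitRel.Quotient G (Finset G) → Finset G) (hrep : ∀ ω, Quotient.mk _ (rep ω) = ω) :
    eG V (α + β) - eG V α - eG V β = 
      ∑ ω, if XS V (rep ω) then 
        eG (stabilizer G (rep ω)) (α ^ ((rep ω).card / Nat.card (stabilizer G (rep ω))) *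
      β ^ ((Nat.card V - (rep ω).card) / Nat.card (stabilizer G (rep ω)))) else 0 := by
  funext U
  rw [Finset.sum_apply]
  simp only [Pi.sub_apply]
  rw [key1, ← Finset.sum_fiberwise _ (fun s => (Quotient.mk _ s : orbitRel.Quotient G (Finset G)))]
  refine Finset.sum_congr rfl fun ω _ => ?_
  have hmem : ∀ s : Finset G, (Quotient.mk _ s : orbitRel.Quotient G (Finset G)) = ω ↔
      s ∈ orbit G (rep ω) := by
    intro s
    conv_lhs => rw [← hrep ω]
    rw [Quotient.eq, orbitRel_apply]
  split_ifs with h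
  · rw [← orb_sum V U α β _ h]
    refine Finset.sum_congr ?_ fun _ _ => rfl
    ext s
    simp only [Finset.mem_filter, Finset.mem_univ, true_and, hmem]
    constructor
    · rintro ⟨⟨_, h1⟩, h2⟩; exact ⟨h1, h2⟩
    · rintro ⟨h1, h2⟩
      refine ⟨⟨?_, h1⟩, h2⟩
      obtain ⟨g, rfl⟩ := h2
      exact XS_smul V g _ h
  · rw [Pi.zero_apply]
    apply Finset.sum_eq_zero
    intro s hs
    simp only [Finset.mem_filter, Finset.mem_univ, true_and, hmem] at hs
    exfalso
    obtain ⟨⟨h1, _⟩, g, rfl⟩ := hs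
    apply h
    have := XS_smul V g⁻¹ _ h1
    simpa using this

theorem Subconj.trans' {U V W : Subgroup G} (h : Subconj U V) (h' : Subconj V W) :
    Subconj U W := by
  obtain ⟨g, hg⟩ := h
  obtain ⟨k, hk⟩ := h'
  refine ⟨g * k, hg.trans ?_⟩
  rw [mul_smul]
  exact Subgroup.pointwise_smul_le_pointwise_smul_iff.2 hk

theorem eG_zero {A : Type*} [CommRing A] (V : Subgroup G) : eG V (0 : A) = 0 := by
  funext U
  unfold eG
  by_cases h : Subconj U V
  · obtain ⟨g, hg⟩ := h
    have h1 := Subgroup.card_le_of_le hg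
    rw [← Nat.card_congr (Subgroup.equivSMul g V).toEquiv] at h1
    have : Nat.card V / Nat.card U ≠ 0 := (Nat.div_pos h1 Nat.card_pos).ne'
    rw [zero_pow this, mul_zero, Pi.zero_apply]
  · have : IsEmpty (MulAction.fixedPoints U (G ⧸ V)) := by
      constructor
      rintro ⟨c, hc⟩
      obtain ⟨x, rfl⟩ := QuotientGroup.mk_surjective c
      exact h ⟨_, (fixed_iff V _ x).1 hc⟩
    simp

theorem ghost_eq {A : Type*} [CommRing A] (U : Subgroup G) (x : SubgroupConjClasses G → A) :
    ghost U x = ∑ C, eG (Quotient.out C) (x C) U := by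
  unfold ghost
  rw [finsum_eq_sum_of_fintype]
  refine Finset.sum_congr rfl fun C _ => ?_
  split_ifs with h
  · rfl
  · have : IsEmpty (MulAction.fixedPoints U (G ⧸ (Quotient.out C : Subgroup G))) := by
      constructor
      rintro ⟨c, hc⟩
      obtain ⟨x, rfl⟩ := QuotientGroup.mk_surjective c
      exact h ⟨_, (fixed_iff _ _ x).1 hc⟩
    simp [eG]

theorem ghost_map {A B : Type*} [CommRing A] [CommRing B] (f : A →+* B) (U : Subgroup G)
    (x : SubgroupConjClasses G → A) : f (ghost U x) = ghost U (fun C => f (x C)) := by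
  simp [ghost_eq, eG]

theorem ghost_add {A : Type*} [CommRing A] (S : SubgroupConjClasses G → Subring A)
    (hS : ∀ C D : SubgroupConjClasses G, Subconj (Quotient.out C) (Quotient.out D) → S D ≤ S C)
    (x y : SubgroupConjClasses G → A) (hx : ∀ C, x C ∈ S C) (hy : ∀ C, y C ∈ S C) :
    ∃ z : SubgroupConjClasses G → A, (∀ C, z C ∈ S C) ∧
      ∀ H : Subgroup G, ghost H x + ghost H y = ghost H z := by
  have := abs_span (B := Subgroup G → A)
    (fun C : SubgroupConjClasses G => Nat.card (Quotient.out C : Subgroup G))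
    (fun C => (S C).toAddSubgroup) (fun C α => eG (Quotient.out C) α) (fun C => eG_zero _) ?_
    (∑ C, eG (Quotient.out C) (x C) + ∑ C, eG (Quotient.out C) (y C)) ?_
  · obtain ⟨z, hz, h⟩ := this
    refine ⟨z, hz, fun H => ?_⟩
    have := congrFun h H
    simpa [ghost_eq] using this
  · intro C α hα β hβ
    choose rep cl h1 h2 using exists_rep (G := G)
    rw [key2 _ α β rep h1]
    refine sum_mem fun ω _ => ?_
    split_ifs with h
    · obtain ⟨p1, p2, p3, p4⟩ := stab_props _ _ h
      rw [h2] at p1 p4 ⊢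
      refine AddSubgroup.subset_closure ⟨cl ω, p1, _, ?_, rfl⟩
      exact (S (cl ω)).mul_mem (pow_mem (hS _ _ p4 hα) _) (pow_mem (hS _ _ p4 hβ) _)
    · exact zero_mem _
  · exact add_mem (sum_mem fun C _ => AddSubgroup.subset_closure ⟨C, _, hx C, rfl⟩)
      (sum_mem fun C _ => AddSubgroup.subset_closure ⟨C, _, hy C, rfl⟩)
end

/-- **Existence of the addition Witt polynomials.**  There is a family `s_U`, indexed
by the conjugacy classes of subgroups `U ≤ G`, of integral polynomials in variables
`a_V`, `b_V` indexed by the conjugacy classes of subgroups `V ≤ G` to which `U` is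
subconjugate (the left summand of the variable type gives the `a`-variables, the
right summand the `b`-variables), such that for every commutative ring `R`, every
subgroup `H ≤ G` and all Witt vectors `x, y ∈ W_G(R)` one has
`φ_H(x) + φ_H(y) = φ_H((s_U(x_V, y_V | U ⪯ V ≤ G))'_{U ≤ G})`. -/
theorem witt_addition_polynomials (G : Type u) [Group G] [Fintype G] :
    ∃ s : ∀ C : SubgroupConjClasses G,
      MvPolynomial
        ({D : SubgroupConjClasses G // Subconj (Quotient.out C) (Quotient.out D)} ⊕
         {D : SubgroupConjClasses G // Subconj (Quotient.out C) (Quotient.out D)}) ℤ,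
      ∀ (R : Type u) [CommRing R] (H : Subgroup G) (x y : SubgroupConjClasses G → R),
        ghost H x + ghost H y =
          ghost H (fun C => MvPolynomial.aeval
            (Sum.elim (fun D => x D.1) (fun D => y D.1)) (s C)) := by
  let ι : ∀ C : SubgroupConjClasses G,
      ({D : SubgroupConjClasses G // Subconj (Quotient.out C) (Quotient.out D)} ⊕
         {D : SubgroupConjClasses G // Subconj (Quotient.out C) (Quotient.out D)}) →
      (SubgroupConjClasses G ⊕ SubgroupConjClasses G) :=
    fun C => Sum.map Subtype.val Subtype.val
  have hrefl : ∀ U : Subgroup G, Subconj U U := fun U => ⟨1, by simp⟩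
  have hS : ∀ C D : SubgroupConjClasses G, Subconj (Quotient.out C) (Quotient.out D) →
      (MvPolynomial.rename (R := ℤ) (ι D)).toRingHom.range ≤
        (MvPolynomial.rename (R := ℤ) (ι C)).toRingHom.range := by
    intro C D hCD
    rintro _ ⟨p, rfl⟩
    refine ⟨MvPolynomial.rename (Sum.map (fun E => ⟨E.1, hCD.trans' E.2⟩)
      (fun E => ⟨E.1, hCD.trans' E.2⟩)) p, ?_⟩
    change MvPolynomial.rename (ι C) (MvPolynomial.rename _ p) = MvPolynomial.rename (ι D) p
    rw [MvPolynomial.rename_rename]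
    congr 2
    funext d
    rcases d with d | d <;> rfl
  obtain ⟨z, hz, h⟩ := ghost_add
    (A := MvPolynomial (SubgroupConjClasses G ⊕ SubgroupConjClasses G) ℤ)
    (fun C => (MvPolynomial.rename (R := ℤ) (ι C)).toRingHom.range) hS
    (fun C => MvPolynomial.X (Sum.inl C)) (fun C => MvPolynomial.X (Sum.inr C))
    (fun C => ⟨MvPolynomial.X (Sum.inl ⟨C, hrefl _⟩), by simp [ι]⟩)
    (fun C => ⟨MvPolynomial.X (Sum.inr ⟨C, hrefl _⟩), by simp [ι]⟩)
  · choose s hs using hz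
    refine ⟨s, fun R _ H x y => ?_⟩
    have h1 := congrArg (MvPolynomial.aeval (R := ℤ) (Sum.elim x y)).toRingHom (h H)
    rw [map_add, ghost_map, ghost_map, ghost_map] at h1
    have h2 : ∀ C, MvPolynomial.aeval (R := ℤ) (Sum.elim x y) (z C) = MvPolynomial.aeval
            (Sum.elim (fun D => x D.1) (fun D => y D.1)) (s C) := by
      intro C
      rw [← hs C]
      change MvPolynomial.aeval (R := ℤ) (Sum.elim x y) (MvPolynomial.rename (ι C) (s C)) = _
      rw [MvPolynomial.aeval_rename]
      congr 2
      funext d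
      rcases d with d | d <;> rfl
    simpa [h2] using h1
end

section
/- Let G be a finite group. There exists a family (m_U), indexed by the conjugacy classes of subgroups U ≤ G, where m_U is a polynomial with integer coefficients in the variables a_V indexed by the conjugacy classes of subgroups V ≤ G with U subconjugate to V, such that for every commutative ring R, every subgroup H ≤ G, and every x = (x_V)'_{V ≤ G} ∈ W_G(R): −φ_H(x) = φ_H((m_U(x_V | U ⪯ V ≤ G))'_{U ≤ G}). -/
open MulAction Pointwise
open scoped Classical

theorem aux_burnside {N Y A : Type*} [Group N] [Fintype N] [Fintype Y] [MulAction N Y]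
    [CommRing A] (w : Y → A) (hw : ∀ (g : N) (y : Y), w (g • y) = w y) :
    (Nat.card N : A) ∣ ∑ g : N, ∑ y : Y, if g • y = y then w y else 0 := by
  rw [Finset.sum_comm]
  rw [← Finset.sum_fiberwise Finset.univ
    (fun y => (Quotient.mk _ y : MulAction.orbitRel.Quotient N Y))]
  refine Finset.dvd_sum fun o _ => ?_
  induction o using Quotient.inductionOn with
  | h z =>
  have h1 : ∀ y ∈ Finset.univ.filter
      (fun y => (Quotient.mk _ y : MulAction.orbitRel.Quotient N Y) = Quotient.mk _ z),
      (∑ g : N, if g • y = y then w y else 0) =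
        (Fintype.card (MulAction.stabilizer N z) : A) * w z := by
    intro y hy
    have hy' : y ∈ MulAction.orbit N z := by
      have := (Finset.mem_filter.1 hy).2
      exact MulAction.orbitRel_apply.1 (Quotient.exact this)
    obtain ⟨g, rfl⟩ := hy'
    have h2 : Fintype.card (MulAction.stabilizer N (g • z)) =
        Fintype.card (MulAction.stabilizer N z) :=
      Fintype.card_congr
        (MulAction.stabilizerEquivStabilizerOfOrbitRel (G := N) (a := g • z) (b := z)
          (MulAction.orbitRel_apply.2 ⟨g, rfl⟩)).toEquiv
    rw [← Finset.sum_filter, Finset.sum_const, nsmul_eq_mul]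
    simp only [hw]
    congr 2
    rw [← h2, Fintype.card_subtype]
    simp only [MulAction.mem_stabilizer_iff]
  rw [Finset.sum_congr rfl h1, Finset.sum_const, nsmul_eq_mul, ← mul_assoc, ← Nat.cast_mul]
  have h3 : (Finset.univ.filter
      (fun y => (Quotient.mk _ y : MulAction.orbitRel.Quotient N Y) = Quotient.mk _ z)).card
      = Fintype.card (MulAction.orbit N z) := by
    rw [Fintype.card_subtype]
    congr 1
    ext y
    simp only [Finset.mem_filter, Finset.mem_univ, true_and]
    exact Quotient.eq.trans MulAction.orbitRel_apply
  rw [h3, MulAction.card_orbit_mul_card_stabilizer_eq_card_group, Nat.card_eq_fintype_card]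
  exact dvd_mul_right _ _

theorem aux_sum_invariant {T J A : Type*} [Fintype T] [Fintype J] [CommRing A] (r : Setoid T)
    (u : T → J → A) :
    (∑ F : T → J, if (∀ a b, r a b → F a = F b) then ∏ t, u t (F t) else 0) =
      ∏ q : Quotient r, ∑ j : J, ∏ t with (Quotient.mk r t) = q, u t j := by
  rw [Finset.prod_univ_sum, Fintype.piFinset_univ, ← Finset.sum_filter]
  symm
  refine Finset.sum_bij (fun (f : Quotient r → J) _ => fun t => f (Quotient.mk r t)) ?_ ?_ ?_ ?_
  · intro f _
    simp only [Finset.mem_filter, Finset.mem_univ, true_and]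
    intro a b h
    rw [Quotient.sound h]
  · intro f _ f' _ h
    funext q
    induction q using Quotient.inductionOn with
    | h t => exact congrFun h t
  · intro F hF
    exact ⟨Quotient.lift F (Finset.mem_filter.1 hF).2, Finset.mem_univ _, rfl⟩
  · intro f _
    rw [← Finset.prod_fiberwise Finset.univ (fun t => Quotient.mk r t)]
    refine Finset.prod_congr rfl fun q _ => Finset.prod_congr rfl fun t ht => ?_
    show _ = u t (f (Quotient.mk r t))
    rw [(Finset.mem_filter.1 ht).2]

/-- weight of a point `t` with colour `o`, given whether the point lies in the coset -/
noncomputable def auxU {I A : Type*} [CommRing A] (v : I → A) (p : Prop) : Option I → A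
  | none => if p then 0 else 1
  | some i => if p then v i else 0

theorem aux_fixed_count {G I A : Type*} [Group G] [Fintype G] [Fintype I] [CommRing A]
    (V W : Subgroup G) (v : I → A) (s : G ⧸ V) (hs : ∀ g ∈ W, g • s = s) :
    (∑ F : G → Option I, if (∀ g ∈ W, ∀ t, F (g * t) = F t) then
        ∏ t : G, auxU v ((t : G ⧸ V) = s) (F t) else 0) =
      (∑ i, v i ^ Nat.card W) ^ (Nat.card V / Nat.card W) := by
  have hWpos : 0 < Nat.card W := Nat.card_pos
  have key := aux_sum_invariant (MulAction.orbitRel W G)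
    (fun (t : G) (o : Option I) => auxU v ((t : G ⧸ V) = s) o)
  have h1 : ∀ F : G → Option I, (∀ a b, (MulAction.orbitRel W G) a b → F a = F b) ↔
      (∀ g ∈ W, ∀ t, F (g * t) = F t) := by
    intro F
    constructor
    · intro h g hg t
      exact h _ _ (MulAction.orbitRel_apply.2 ⟨⟨g, hg⟩, rfl⟩)
    · intro h a b hab
      obtain ⟨g, rfl⟩ := MulAction.orbitRel_apply.1 hab
      exact h g.1 g.2 b
  simp only [h1] at key
  rw [key]
  clear key
  have hfib : ∀ q : Quotient (MulAction.orbitRel W G),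
      (Finset.univ.filter (fun t => Quotient.mk (MulAction.orbitRel W G) t = q)).card
        = Nat.card W := by
    intro q
    induction q using Quotient.inductionOn with
    | h z =>
    rw [Nat.card_eq_fintype_card, ← Finset.card_univ]
    symm
    refine Finset.card_bij (fun (g : W) _ => (g : G) * z) ?_ ?_ ?_
    · intro g _
      simp only [Finset.mem_filter, Finset.mem_univ, true_and]
      exact Quotient.sound (MulAction.orbitRel_apply.2 ⟨g, rfl⟩)
    · intro g _ g' _ h
      exact Subtype.ext (mul_right_cancel h)
    · intro t ht
      obtain ⟨g, hg⟩ := MulAction.orbitRel_apply.1 (Quotient.exact (Finset.mem_filter.1 ht).2)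
      exact ⟨g, Finset.mem_univ _, hg⟩
  have hin : ∀ (q : Quotient (MulAction.orbitRel W G)) (t : G),
      Quotient.mk (MulAction.orbitRel W G) t = q → (((t : G ⧸ V) = s) ↔ ((q.out : G) : G ⧸ V) = s) := by
    intro q t h
    have : Quotient.mk (MulAction.orbitRel W G) t = Quotient.mk (MulAction.orbitRel W G) q.out := by
      rw [h, Quotient.out_eq]
    obtain ⟨g, hg⟩ := MulAction.orbitRel_apply.1 (Quotient.exact this)
    have hg' : ((g : G) • ((q.out : G) : G ⧸ V)) = (t : G ⧸ V) := by
      rw [← hg]; rfl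
    rw [← hg']
    constructor
    · intro h2
      have := hs _ (W.inv_mem g.2)
      rw [← this, ← h2, inv_smul_smul]
    · intro h2
      rw [h2, hs _ g.2]
  have hterm : ∀ q : Quotient (MulAction.orbitRel W G),
      (∑ j : Option I, ∏ t with (Quotient.mk (MulAction.orbitRel W G) t) = q,
        auxU v ((t : G ⧸ V) = s) j) =
      if ((q.out : G) : G ⧸ V) = s then ∑ i, v i ^ Nat.card W else 1 := by
    intro q
    have : ∀ j : Option I, (∏ t with (Quotient.mk (MulAction.orbitRel W G) t) = q,
        auxU v ((t : G ⧸ V) = s) j) = (auxU v (((q.out : G) : G ⧸ V) = s) j) ^ Nat.card W := by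
      intro j
      rw [← hfib q, ← Finset.prod_const]
      refine Finset.prod_congr rfl fun t ht => ?_
      rw [propext (hin q t (Finset.mem_filter.1 ht).2)]
    simp only [this, Fintype.sum_option]
    by_cases hq : ((q.out : G) : G ⧸ V) = s
    · simp [auxU, hq]
    · simp [auxU, hq]
  refine (Finset.prod_congr rfl (g := fun q : Quotient (MulAction.orbitRel W G) =>
    if ((q.out : G) : G ⧸ V) = s then ∑ i, v i ^ Nat.card W else 1)
    fun q _ => by convert hterm q).trans ?_
  rw [Finset.prod_ite, Finset.prod_const,
    Finset.prod_const_one, mul_one]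
  congr 1
  symm
  apply Nat.div_eq_of_eq_mul_left hWpos
  have hc : (Finset.univ.filter (fun t : G => (t : G ⧸ V) = s)).card = Nat.card V := by
    induction s using QuotientGroup.induction_on with
    | H z =>
    rw [Nat.card_eq_fintype_card, ← Finset.card_univ]
    symm
    refine Finset.card_bij (fun (g : V) _ => z * (g : G)) ?_ ?_ ?_
    · intro g _
      simp
    · intro g _ g' _ h
      exact Subtype.ext (mul_left_cancel h)
    · intro t ht
      have := QuotientGroup.eq.1 (Finset.mem_filter.1 ht).2.symm
      exact ⟨⟨_, this⟩, Finset.mem_univ _, by simp⟩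
  rw [← hc]
  rw [Finset.card_eq_sum_card_fiberwise (f := fun t => Quotient.mk (MulAction.orbitRel W G) t)
    (t := Finset.univ.filter fun q : Quotient (MulAction.orbitRel W G) => ((q.out : G) : G ⧸ V) = s)]
  · have hx : ∀ q ∈ Finset.univ.filter
        (fun q : Quotient (MulAction.orbitRel W G) => ((q.out : G) : G ⧸ V) = s),
        (Finset.filter (fun t => Quotient.mk (MulAction.orbitRel W G) t = q)
          (Finset.univ.filter (fun t : G => (t : G ⧸ V) = s))).card = Nat.card W := ?_
    · have := Finset.sum_const_nat hx
      convert this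
    intro q hq
    rw [← hfib q, Finset.filter_filter]
    congr 1
    ext t
    simp only [Finset.mem_filter, Finset.mem_univ, true_and, and_iff_right_iff_imp]
    intro ht
    exact (hin q t ht).2 (Finset.mem_filter.1 hq).2
  · intro t ht
    simp only [Finset.coe_filter, Finset.mem_univ, true_and, Set.mem_ofPred_eq] at ht ⊢
    exact (hin _ t rfl).1 ht

/-- number of fixed points of `W` on `G/V` -/
noncomputable def auxK {G : Type*} [Group G] (V W : Subgroup G) : ℕ :=
  Nat.card (MulAction.fixedPoints W (G ⧸ V))

theorem aux_mem_fixed {G : Type*} [Group G] (V W : Subgroup G) (s : G ⧸ V) :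
    s ∈ MulAction.fixedPoints W (G ⧸ V) ↔ ∀ g ∈ W, g • s = s :=
  ⟨fun h g hg => h ⟨g, hg⟩, fun h g => h g.1 g.2⟩

theorem aux_weighted_fixed {G I A : Type*} [Group G] [Fintype G] [Fintype I] [CommRing A]
    (V W : Subgroup G) (v : I → A) :
    (∑ y : (G ⧸ V) × (G → Option I),
      if ((∀ g ∈ W, g • y.1 = y.1) ∧ ∀ g ∈ W, ∀ t, y.2 (g * t) = y.2 t) then
        ∏ t : G, auxU v ((t : G ⧸ V) = y.1) (y.2 t) else 0) =
      (auxK V W : A) * (∑ i, v i ^ Nat.card W) ^ (Nat.card V / Nat.card W) := by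
  rw [Fintype.sum_prod_type]
  have : ∀ s : G ⧸ V, (∑ F : G → Option I,
      if ((∀ g ∈ W, g • s = s) ∧ ∀ g ∈ W, ∀ t, F (g * t) = F t) then
        ∏ t : G, auxU v ((t : G ⧸ V) = s) (F t) else 0) =
      if (∀ g ∈ W, g • s = s) then
        (∑ i, v i ^ Nat.card W) ^ (Nat.card V / Nat.card W) else 0 := by
    intro s
    split_ifs with hs
    · rw [← aux_fixed_count V W v s hs]
      refine Finset.sum_congr rfl fun F _ => ?_
      simp only [eq_true hs, true_and]
    · refine Finset.sum_eq_zero fun F _ => ?_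
      rw [if_neg]
      exact fun h => hs h.1
  simp only [this]
  rw [← Finset.sum_filter, Finset.sum_const, nsmul_eq_mul]
  congr 2
  rw [auxK, Nat.card_eq_fintype_card, Fintype.card_subtype]
  congr 1
  ext s
  simp only [Finset.mem_filter, Finset.mem_univ, true_and, aux_mem_fixed]

theorem aux_congr_pos {G I A : Type*} [Group G] [Fintype G] [Fintype I] [CommRing A]
    (U V : Subgroup G) (v : I → A) :
    (Nat.card (Subgroup.normalizer (U : Set G)) : A) ∣
      ∑ g : Subgroup.normalizer (U : Set G),
        (auxK V (Subgroup.zpowers (g : G) ⊔ U) : A) *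
          (∑ i, v i ^ Nat.card ↥(Subgroup.zpowers (g : G) ⊔ U)) ^
            (Nat.card V / Nat.card ↥(Subgroup.zpowers (g : G) ⊔ U)) := by
  let _ : MulAction G (G → Option I) := arrowAction
  have hsm : ∀ (g : G) (F : G → Option I) (t : G), (g • F) t = F (g⁻¹ * t) := fun _ _ _ => rfl
  have hfix : ∀ (W : Subgroup G) (y : (G ⧸ V) × (G → Option I)),
      ((∀ g ∈ W, g • y.1 = y.1) ∧ ∀ g ∈ W, ∀ t, y.2 (g * t) = y.2 t) ↔
        W ≤ MulAction.stabilizer G y := by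
    intro W y
    constructor
    · rintro ⟨h1, h2⟩ g hg
      refine Prod.ext (h1 g hg) (funext fun t => ?_)
      exact h2 _ (W.inv_mem hg) t
    · intro h
      refine ⟨fun g hg => congrArg Prod.fst (h hg), fun g hg t => ?_⟩
      have := congrFun (congrArg Prod.snd (h (W.inv_mem hg))) t
      have h3 : (g⁻¹ • y.2) t = y.2 t := this
      rw [hsm, inv_inv] at h3
      exact h3
  have hB := aux_burnside (N := Subgroup.normalizer (U : Set G))
    (Y := (G ⧸ V) × (G → Option I))
    (fun y => if U ≤ MulAction.stabilizer G y then
        ∏ t : G, auxU v ((t : G ⧸ V) = y.1) (y.2 t) else 0) ?_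
  · convert hB using 2 with g _
    rw [← aux_weighted_fixed]
    refine Finset.sum_congr rfl fun y _ => ?_
    have hi := hfix (Subgroup.zpowers (g : G) ⊔ U) y
    rw [sup_le_iff, Subgroup.zpowers_le, MulAction.mem_stabilizer_iff] at hi
    by_cases h1 : (g : G) • y = y ∧ U ≤ MulAction.stabilizer G y
    · have h1' : g • y = y := h1.1
      rw [if_pos (hi.2 h1)]
      symm
      split_ifs with h2 h3
      · rfl
      · exact absurd h1.2 h3
      · exact absurd h1' h2
    · rw [if_neg (fun h => h1 (hi.1 h))]
      symm
      split_ifs with h2 h3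
      · exact absurd ⟨h2, h3⟩ h1
      · rfl
      · rfl
  · intro g y
    have e1 : (U ≤ MulAction.stabilizer G (g • y)) ↔ U ≤ MulAction.stabilizer G y := by
      have hst : ∀ x : G, x ∈ MulAction.stabilizer G (g • y) ↔
          (g : G)⁻¹ * x * g ∈ MulAction.stabilizer G y := by
        intro x
        rw [MulAction.mem_stabilizer_iff, MulAction.mem_stabilizer_iff, mul_smul, mul_smul,
          inv_smul_eq_iff]
        rfl
      have hn := Subgroup.mem_normalizer_iff.1 g.2
      constructor
      · intro h x hx
        have := (hst _).1 (h ((hn x).1 hx))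
        simpa [mul_assoc] using this
      · intro h x hx
        rw [hst]
        apply h
        rw [SetLike.mem_coe.symm] at hx
        apply (hn _).2
        simpa [mul_assoc] using hx
    show (if U ≤ MulAction.stabilizer G (g • y) then
        ∏ t : G, auxU v ((t : G ⧸ V) = (g • y).1) ((g • y).2 t) else 0) =
      (if U ≤ MulAction.stabilizer G y then
        ∏ t : G, auxU v ((t : G ⧸ V) = y.1) (y.2 t) else 0)
    refine if_congr e1 ?_ rfl
    refine Fintype.prod_equiv (Equiv.mulLeft (g : G)⁻¹) _ _ fun t => ?_
    have e2 : (((t : G) : G ⧸ V) = (g • y).1) ↔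
        (((Equiv.mulLeft (g : G)⁻¹ t : G)) : G ⧸ V) = y.1 := by
      have : (((Equiv.mulLeft (g : G)⁻¹ t : G)) : G ⧸ V) = (g : G)⁻¹ • (t : G ⧸ V) := rfl
      rw [this, inv_smul_eq_iff]
      rfl
    rw [propext e2]
    rfl

theorem aux_pos_rep {σ : Type*} (n : ℕ) (hn : 0 < n) (p : MvPolynomial σ ℤ) :
    ∃ (I : Type) (_ : Fintype I) (e : I → (σ →₀ ℕ)),
      (n : MvPolynomial σ ℤ) ∣ p - ∑ i, MvPolynomial.monomial (e i) 1 := by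
  induction p using MvPolynomial.induction_on' with
  | monomial u a =>
    refine ⟨Fin (a % n).toNat, inferInstance, fun _ => u, ?_⟩
    have h0 : 0 ≤ a % (n : ℤ) := Int.emod_nonneg _ (by omega)
    rw [Finset.sum_const, Finset.card_univ, Fintype.card_fin]
    have : (a % n).toNat • (MvPolynomial.monomial u (1 : ℤ)) = MvPolynomial.monomial u (a % n) := by
      rw [← map_nsmul]
      congr 1
      simp [h0]
    rw [this, ← map_sub]
    refine ⟨MvPolynomial.monomial u (a / n), ?_⟩
    rw [← nsmul_eq_mul, ← map_nsmul]
    congr 1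
    have := Int.mul_ediv_add_emod a n
    simp only [nsmul_eq_mul]
    linarith
  | add p q hp hq =>
    obtain ⟨I, _, e, h⟩ := hp
    obtain ⟨I', _, e', h'⟩ := hq
    refine ⟨I ⊕ I', inferInstance, Sum.elim e e', ?_⟩
    rw [Fintype.sum_sum_type]
    have := dvd_add h h'
    simp only [Sum.elim_inl, Sum.elim_inr]
    convert this using 1
    ring

theorem aux_congr {G σ : Type*} [Group G] [Fintype G] (U V : Subgroup G)
    (p : MvPolynomial σ ℤ) :
    (Nat.card (Subgroup.normalizer (U : Set G)) : MvPolynomial σ ℤ) ∣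
      ∑ g : Subgroup.normalizer (U : Set G),
        (auxK V (Subgroup.zpowers (g : G) ⊔ U) : MvPolynomial σ ℤ) *
          (MvPolynomial.expand (Nat.card ↥(Subgroup.zpowers (g : G) ⊔ U)) p) ^
            (Nat.card V / Nat.card ↥(Subgroup.zpowers (g : G) ⊔ U)) := by
  obtain ⟨I, _, e, h⟩ := aux_pos_rep (Nat.card (Subgroup.normalizer (U : Set G)))
    Nat.card_pos p
  have h1 := aux_congr_pos U V (fun i => (MvPolynomial.monomial (e i) (1 : ℤ)))
  rw [← dvd_sub_left h1, ← Finset.sum_sub_distrib]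
  refine Finset.dvd_sum fun g _ => ?_
  rw [← mul_sub]
  refine Dvd.dvd.mul_left ?_ _
  refine dvd_trans ?_ (sub_dvd_pow_sub_pow _ _ _)
  have h2 := map_dvd (MvPolynomial.expand (Nat.card ↥(Subgroup.zpowers (g : G) ⊔ U))) h
  rw [map_natCast, map_sub, map_sum] at h2
  convert h2 using 4 with i
  rw [MvPolynomial.expand_monomial, MvPolynomial.monomial_pow, one_pow]

theorem aux_card_smul {G : Type*} [Group G] (g : ConjAct G) (V : Subgroup G) :
    Nat.card ↥(g • V) = Nat.card V :=
  Nat.card_congr (Subgroup.equivSMul g V).toEquiv.symm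

theorem aux_subconj_trans {G : Type*} [Group G] {U V W : Subgroup G} (h : Subconj U V)
    (h' : Subconj V W) : Subconj U W := by
  obtain ⟨g, hg⟩ := h
  obtain ⟨g', hg'⟩ := h'
  refine ⟨g * g', hg.trans ?_⟩
  rw [mul_smul]
  exact Subgroup.pointwise_smul_le_pointwise_smul_iff.2 hg'

theorem aux_subconj_card {G : Type*} [Group G] [Fintype G] {U V : Subgroup G} (h : Subconj U V) :
    Nat.card U ≤ Nat.card V := by
  obtain ⟨g, hg⟩ := h
  rw [← aux_card_smul g V]
  exact Subgroup.card_le_of_le hg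

theorem aux_subconj_eq {G : Type*} [Group G] [Fintype G] {C D : SubgroupConjClasses G}
    (h : Subconj (Quotient.out C) (Quotient.out D))
    (hc : Nat.card (Quotient.out D : Subgroup G) ≤ Nat.card (Quotient.out C : Subgroup G)) :
    C = D := by
  obtain ⟨g, hg⟩ := h
  have : Quotient.out C = g • Quotient.out D := by
    apply Subgroup.eq_of_le_of_card_ge hg
    rw [aux_card_smul]
    exact hc
  rw [← Quotient.out_eq C, ← Quotient.out_eq D]
  exact Quotient.sound (MulAction.orbitRel_apply.2 ⟨g, this.symm⟩)

theorem aux_K_subconj {G : Type*} [Group G] {V W : Subgroup G} (h : auxK V W ≠ 0) :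
    Subconj W V := by
  have : Nonempty (MulAction.fixedPoints W (G ⧸ V)) := by
    by_contra hn
    rw [not_nonempty_iff] at hn
    exact h Nat.card_of_isEmpty
  obtain ⟨s, hs⟩ := this
  rw [aux_mem_fixed] at hs
  induction s using QuotientGroup.induction_on with
  | H z =>
  refine ⟨ConjAct.toConjAct z, fun w hw => ?_⟩
  rw [Subgroup.mem_pointwise_smul_iff_inv_smul_mem, ← ConjAct.toConjAct_inv,
    ConjAct.toConjAct_smul]
  have := QuotientGroup.eq.1 (hs w hw).symm
  simpa [mul_assoc] using this

theorem aux_K_self {G : Type*} [Group G] [Fintype G] (U : Subgroup G) :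
    auxK U U * Nat.card U = Nat.card (Subgroup.normalizer (U : Set G)) := by
  rw [auxK, Nat.card_congr (Sylow.fixedPointsMulLeftCosetsEquivQuotient U)]
  have : U.subgroupOf (Subgroup.normalizer (U : Set G)) ≃ U :=
    (Subgroup.subgroupOfEquivOfLe Subgroup.le_normalizer).toEquiv
  rw [← Nat.card_congr this]
  exact (Subgroup.card_eq_card_quotient_mul_card_subgroup _).symm

theorem aux_K_conj {G : Type*} [Group G] (g : ConjAct G) (V W : Subgroup G) :
    auxK V (g • W) = auxK V W := by
  symm
  refine Nat.card_congr ((MulAction.toPerm (ConjAct.ofConjAct g) : Equiv.Perm (G ⧸ V)).subtypeEquiv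
    fun s => ?_)
  rw [aux_mem_fixed, aux_mem_fixed]
  simp only [MulAction.toPerm_apply]
  constructor
  · intro h w hw
    rw [Subgroup.mem_pointwise_smul_iff_inv_smul_mem] at hw
    have := h _ hw
    rw [ConjAct.smul_def, mul_smul, mul_smul] at this
    simpa [inv_smul_eq_iff] using this
  · intro h w hw
    have := h _ (Subgroup.smul_mem_pointwise_smul w g W hw)
    rw [ConjAct.smul_def, mul_smul, mul_smul] at this
    simpa using this

theorem aux_ghost_eq {G : Type*} [Group G] [Fintype G] {R : Type*} [CommRing R]
    (U : Subgroup G) (x : SubgroupConjClasses G → R) :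
    ghost U x = ∑ C : SubgroupConjClasses G, (auxK (Quotient.out C) U : R) *
      x C ^ (Nat.card (Quotient.out C : Subgroup G) / Nat.card U) := by
  rw [ghost, finsum_eq_sum_of_fintype]
  refine Finset.sum_congr rfl fun C _ => ?_
  split_ifs with h
  · rfl
  · have : auxK (Quotient.out C) U = 0 := by
      by_contra h'
      exact h (aux_K_subconj h')
    rw [this]; simp

theorem aux_ghost_conj {G : Type*} [Group G] [Fintype G] {R : Type*} [CommRing R]
    (g : ConjAct G) (U : Subgroup G) (x : SubgroupConjClasses G → R) :
    ghost (g • U) x = ghost U x := by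
  rw [aux_ghost_eq, aux_ghost_eq]
  simp only [aux_K_conj, aux_card_smul]

theorem aux_ghost_map {G : Type*} [Group G] [Fintype G] {R S : Type*} [CommRing R] [CommRing S]
    (f : R →+* S) (U : Subgroup G) (x : SubgroupConjClasses G → R) :
    f (ghost U x) = ghost U (fun C => f (x C)) := by
  rw [aux_ghost_eq, aux_ghost_eq]
  simp only [map_sum, map_mul, map_pow, map_natCast]

theorem aux_ghost_congr {G σ : Type*} [Group G] [Fintype G] (U : Subgroup G)
    (x : SubgroupConjClasses G → MvPolynomial σ ℤ) :
    (Nat.card (Subgroup.normalizer (U : Set G)) : MvPolynomial σ ℤ) ∣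
      ∑ g : Subgroup.normalizer (U : Set G),
        MvPolynomial.expand (Nat.card ↥(Subgroup.zpowers (g : G) ⊔ U))
          (ghost (Subgroup.zpowers (g : G) ⊔ U) x) := by
  simp only [aux_ghost_eq, map_sum, map_mul, map_pow, map_natCast]
  rw [Finset.sum_comm]
  exact Finset.dvd_sum fun C _ => aux_congr U _ _

theorem aux_level {G σ : Type*} [Group G] [Fintype G] (U : Subgroup G)
    (x y : SubgroupConjClasses G → MvPolynomial σ ℤ)
    (h : ∀ W : Subgroup G, Nat.card U < Nat.card W → ghost W y + ghost W x = 0) :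
    (auxK U U : MvPolynomial σ ℤ) ∣ ghost U y + ghost U x := by
  have h1 := dvd_add (aux_ghost_congr U y) (aux_ghost_congr U x)
  rw [← Finset.sum_add_distrib] at h1
  have h2 : ∀ g : Subgroup.normalizer (U : Set G),
      MvPolynomial.expand (Nat.card ↥(Subgroup.zpowers (g : G) ⊔ U))
          (ghost (Subgroup.zpowers (g : G) ⊔ U) y) +
      MvPolynomial.expand (Nat.card ↥(Subgroup.zpowers (g : G) ⊔ U))
          (ghost (Subgroup.zpowers (g : G) ⊔ U) x) =
      if (g : G) ∈ U then MvPolynomial.expand (Nat.card U) (ghost U y + ghost U x) else 0 := by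
    intro g
    split_ifs with hg
    · have : Subgroup.zpowers (g : G) ⊔ U = U :=
        sup_eq_right.2 (by rwa [Subgroup.zpowers_le])
      rw [this, map_add]
    · rw [← map_add, h, map_zero]
      by_contra hc
      have : U = Subgroup.zpowers (g : G) ⊔ U :=
        Subgroup.eq_of_le_of_card_ge le_sup_right (not_lt.1 hc)
      apply hg
      exact this.ge (Subgroup.mem_sup_left (Subgroup.mem_zpowers _))
  rw [Finset.sum_congr rfl fun g _ => h2 g, ← Finset.sum_filter, Finset.sum_const,
    nsmul_eq_mul] at h1
  have h3 : (Finset.univ.filter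
      (fun g : Subgroup.normalizer (U : Set G) => (g : G) ∈ U)).card = Nat.card U := by
    rw [← Nat.card_congr (Subgroup.subgroupOfEquivOfLe
      (Subgroup.le_normalizer (H := U))).toEquiv, Nat.card_eq_fintype_card, Fintype.card_subtype]
    rfl
  rw [h3, ← aux_K_self, Nat.cast_mul, mul_comm] at h1
  have h4 : (Nat.card U : MvPolynomial σ ℤ) ≠ 0 := by
    exact_mod_cast (Nat.card_pos (α := U)).ne'
  have h5 := (mul_dvd_mul_iff_left h4).1 h1
  have hcast : (auxK U U : MvPolynomial σ ℤ) = MvPolynomial.C (auxK U U : ℤ) := by simp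
  rw [hcast, MvPolynomial.C_dvd_iff_dvd_coeff] at h5 ⊢
  intro i
  have := h5 (Nat.card U • i)
  rwa [MvPolynomial.coeff_expand_smul _ (Nat.card_pos (α := U)).ne'] at this

theorem aux_K_self_ne {G : Type*} [Group G] [Fintype G] (U : Subgroup G) : auxK U U ≠ 0 := by
  intro h
  have := aux_K_self U
  rw [h, zero_mul] at this
  exact (Nat.card_pos (α := Subgroup.normalizer (U : Set G))).ne this

/-- the variables allowed at level `C` -/
def auxS {G : Type*} [Group G] (C : SubgroupConjClasses G) : Set (SubgroupConjClasses G) :=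
  {D | Subconj (Quotient.out C) (Quotient.out D)}

theorem aux_ghost_supported {G : Type*} [Group G] [Fintype G] (C : SubgroupConjClasses G)
    (y : SubgroupConjClasses G → MvPolynomial (SubgroupConjClasses G) ℤ)
    (hy : ∀ D, y D ∈ MvPolynomial.supported ℤ (auxS D)) :
    ghost (Quotient.out C) y ∈ MvPolynomial.supported ℤ (auxS C) := by
  rw [aux_ghost_eq]
  refine Subalgebra.sum_mem _ fun D _ => ?_
  by_cases h : auxK (Quotient.out D) (Quotient.out C) = 0
  · rw [h]; simp
  · have hs := aux_K_subconj h
    refine Subalgebra.mul_mem _ (natCast_mem _ _) (Subalgebra.pow_mem _ ?_ _)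
    refine MvPolynomial.supported_mono ?_ (hy D)
    intro E hE
    exact aux_subconj_trans hs hE

theorem aux_refl {G : Type*} [Group G] (U : Subgroup G) : Subconj U U := ⟨1, by simp⟩

theorem aux_construct (G : Type*) [Group G] [Fintype G] (k : ℕ) :
    ∃ y : SubgroupConjClasses G → MvPolynomial (SubgroupConjClasses G) ℤ,
      (∀ D, y D ∈ MvPolynomial.supported ℤ (auxS D)) ∧
      ∀ W : Subgroup G, Nat.card G < Nat.card W + k →
        ghost W y + ghost W MvPolynomial.X = 0 := by
  induction k with
  | zero =>
    refine ⟨fun _ => 0, fun D => Subalgebra.zero_mem _, fun W hW => ?_⟩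
    exact absurd (Subgroup.card_le_card_group W) (by omega)
  | succ k ih =>
    obtain ⟨y, hy, hW⟩ := ih
    have hq : ∀ C : SubgroupConjClasses G, ∃ q : MvPolynomial (SubgroupConjClasses G) ℤ,
        q ∈ MvPolynomial.supported ℤ (auxS C) ∧
        (Nat.card (Quotient.out C : Subgroup G) + k = Nat.card G →
          ghost (Quotient.out C) y + ghost (Quotient.out C) MvPolynomial.X =
            (auxK (Quotient.out C : Subgroup G) (Quotient.out C) :
              MvPolynomial (SubgroupConjClasses G) ℤ) * q) := by
      intro C
      by_cases hC : Nat.card (Quotient.out C : Subgroup G) + k = Nat.card G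
      · obtain ⟨q, hq⟩ := aux_level (Quotient.out C) MvPolynomial.X y
          (fun W hlt => hW W (by omega))
        refine ⟨q, ?_, fun _ => hq⟩
        have h1 : ghost (Quotient.out C) y + ghost (Quotient.out C) MvPolynomial.X ∈
            MvPolynomial.supported ℤ (auxS C) := by
          refine Subalgebra.add_mem _ (aux_ghost_supported C y hy)
            (aux_ghost_supported C _ fun D => ?_)
          exact MvPolynomial.X_mem_supported.2 (aux_refl _)
        have hcast : (auxK (Quotient.out C) (Quotient.out C) :
            MvPolynomial (SubgroupConjClasses G) ℤ) =
            MvPolynomial.C (auxK (Quotient.out C) (Quotient.out C) : ℤ) := by simp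
        rw [hq, hcast, MvPolynomial.mem_supported, MvPolynomial.vars_C_mul _
          (by exact_mod_cast aux_K_self_ne _)] at h1
        exact MvPolynomial.mem_supported.2 h1
      · exact ⟨0, Subalgebra.zero_mem _, fun h => absurd h hC⟩
    choose q hqs hqe using hq
    refine ⟨fun C => if Nat.card (Quotient.out C : Subgroup G) + k = Nat.card G then
      y C - q C else y C, fun D => ?_, fun W hlt => ?_⟩
    · dsimp only
      split_ifs
      · exact Subalgebra.sub_mem _ (hy D) (hqs D)
      · exact hy D
    · by_cases hlt' : Nat.card G < Nat.card W + k
      · rw [← hW W hlt']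
        congr 1
        rw [aux_ghost_eq, aux_ghost_eq]
        refine Finset.sum_congr rfl fun C _ => ?_
        by_cases h0 : auxK (Quotient.out C) W = 0
        · simp [h0]
        · have := aux_subconj_card (aux_K_subconj h0)
          rw [if_neg (by omega)]
      · have hcW : Nat.card W + k = Nat.card G := by omega
        obtain ⟨g, hg⟩ : ∃ g : ConjAct G,
            g • W = Quotient.out (Quotient.mk _ W : SubgroupConjClasses G) :=
          MulAction.orbitRel_apply.1 (Quotient.mk_out (s := MulAction.orbitRel _ _) W)
        have hcard : Nat.card (Quotient.out (Quotient.mk _ W : SubgroupConjClasses G) : Subgroup G) =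
            Nat.card W := by rw [← hg, aux_card_smul]
        rw [← aux_ghost_conj g, ← aux_ghost_conj g W, hg]
        generalize (Quotient.mk _ W : SubgroupConjClasses G) = C at hcard
        have hC : Nat.card (Quotient.out C : Subgroup G) + k = Nat.card G := by omega
        have h1 := hqe C hC
        have h2 : ghost (Quotient.out C) (fun C => if Nat.card (Quotient.out C : Subgroup G) + k
            = Nat.card G then y C - q C else y C) - ghost (Quotient.out C) y =
            - ((auxK (Quotient.out C : Subgroup G) (Quotient.out C) :
              MvPolynomial (SubgroupConjClasses G) ℤ) * q C) := by
          rw [aux_ghost_eq, aux_ghost_eq, ← Finset.sum_sub_distrib, Finset.sum_eq_single C]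
          · rw [if_pos hC, Nat.div_self Nat.card_pos]
            ring
          · intro D _ hD
            by_cases h0 : auxK (Quotient.out D) (Quotient.out C) = 0
            · simp [h0]
            · have hs := aux_K_subconj h0
              have : ¬ Nat.card (Quotient.out D : Subgroup G) ≤
                  Nat.card (Quotient.out C : Subgroup G) :=
                fun hle => hD (aux_subconj_eq hs hle).symm
              rw [if_neg (by omega), sub_self]
          · intro h; exact absurd (Finset.mem_univ _) h
        linear_combination h1 + h2

/-- **Existence of the negation Witt polynomials.**  There is a family `m_U`, indexed
by the conjugacy classes of subgroups `U ≤ G`, of integral polynomials in variables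
`a_V` indexed by the conjugacy classes of subgroups `V ≤ G` to which `U` is
subconjugate, such that for every commutative ring `R`, every subgroup `H ≤ G` and
every Witt vector `x ∈ W_G(R)` one has
`−φ_H(x) = φ_H((m_U(x_V | U ⪯ V ≤ G))'_{U ≤ G})`. -/
theorem witt_negation_polynomials (G : Type u) [Group G] [Fintype G] :
    ∃ m : ∀ C : SubgroupConjClasses G,
      MvPolynomial
        {D : SubgroupConjClasses G // Subconj (Quotient.out C) (Quotient.out D)} ℤ,
      ∀ (R : Type u) [CommRing R] (H : Subgroup G) (x : SubgroupConjClasses G → R),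
        - ghost H x =
          ghost H (fun C => MvPolynomial.aeval (fun D => x D.1) (m C)) := by
  obtain ⟨y, hy, hW⟩ := aux_construct G (Nat.card G)
  have hy' : ∀ C, ∃ p : MvPolynomial
      {D : SubgroupConjClasses G // Subconj (Quotient.out C) (Quotient.out D)} ℤ,
      MvPolynomial.rename Subtype.val p = y C := by
    intro C
    have := hy C
    rw [MvPolynomial.supported_eq_range_rename] at this
    exact this
  choose m hm using hy'
  refine ⟨m, fun R _ H x => ?_⟩
  have h1 := hW H (by have := Nat.card_pos (α := H); omega)
  have h2 := congrArg (MvPolynomial.aeval x : MvPolynomial (SubgroupConjClasses G) ℤ →ₐ[ℤ] R) h1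
  rw [map_add, map_zero] at h2
  have h3 := fun z => aux_ghost_map
    ((MvPolynomial.aeval x : MvPolynomial (SubgroupConjClasses G) ℤ →ₐ[ℤ] R) :
      MvPolynomial (SubgroupConjClasses G) ℤ →+* R) H z
  simp only [RingHom.coe_coe] at h3
  rw [h3, h3] at h2
  simp only [MvPolynomial.aeval_X, ← hm, MvPolynomial.aeval_rename] at h2
  exact (eq_neg_of_add_eq_zero_left h2).symm
end

section
/- Let G be a finite group, let V₁, …, V_k ≤ G be a sequence of subgroups, and let ε₁, …, ε_k ∈ {+1, −1}. Then there exists for every conjugacy class of subgroups U ≤ G a polynomial ξ_U ∈ ℤ[x₁, …, x_k] with integer coefficients such that for every commutative ring R, every subgroup H ≤ G, and all s₁, …, s_k ∈ R: Σ_{i=1}^{k} ε_i · |(G/V_i)^H| · s_i^{(V_i:H)} = Σ'_{U ≤ G} |(G/U)^H| · (ξ_U(s₁, …, s_k))^{(U:H)}, where the primed sum takes exactly one summand for each conjugacy class of subgroups U of G, the exponent (K:H) means |K|/|H|, and any summand whose fixed-point count |(G/K)^H| vanishes (which happens unless some conjugate of H is contained in K) is zero. -/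
open MulAction Pointwise
open scoped Classical

theorem orbit_dvd {W X A : Type*} [Group W] [Finite W] [Fintype X] [MulAction W X] [CommRing A]
    (D : X → A) (hD : ∀ (w : W) x, D (w • x) = D x)
    (hdvd : ∀ x, (Nat.card (stabilizer W x) : A) ∣ D x) :
    (Nat.card W : A) ∣ ∑ x, D x := by
  have : Fintype (orbitRel.Quotient W X) := Fintype.ofFinite _
  rw [← Finset.sum_fiberwise (s := Finset.univ) (g := fun x => (Quotient.mk'' x : orbitRel.Quotient W X))]
  refine Finset.dvd_sum fun ω _ => ?_
  induction ω using Quotient.inductionOn' with | _ x =>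
  have h1 : ∀ y ∈ Finset.univ.filter
      (fun y => (Quotient.mk'' y : orbitRel.Quotient W X) = Quotient.mk'' x), D y = D x := by
    intro y hy
    rw [Finset.mem_filter, Quotient.eq''] at hy
    obtain ⟨w, rfl⟩ := hy.2
    exact hD w x
  rw [Finset.sum_congr rfl h1, Finset.sum_const, nsmul_eq_mul]
  have h2 : (Finset.univ.filter
      (fun y => (Quotient.mk'' y : orbitRel.Quotient W X) = Quotient.mk'' x)).card
      = Nat.card (orbit W x) := by
    rw [Nat.card_eq_fintype_card, Fintype.card_subtype]
    congr 1
    ext y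
    simp only [Finset.mem_filter, Finset.mem_univ, true_and]
    rw [Quotient.eq'']; rfl
  rw [h2]
  have h3 : Nat.card (orbit W x) * Nat.card (stabilizer W x) = Nat.card W := by
    rw [← Nat.card_prod]; exact Nat.card_congr (orbitProdStabilizerEquivGroup W x)
  rw [← h3]; push_cast
  exact mul_dvd_mul_left _ (hdvd x)

@[reducible] def rightArrowAction (Q J : Type*) [Group Q] : MulAction Q (Q → J) where
  smul g F := fun a => F (a * g)
  one_smul F := by funext a; change F (a * 1) = F a; simp
  mul_smul g h F := by funext a; change F (a * (g * h)) = F (a * g * h); rw [mul_assoc]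

theorem sum_fixed {Q J A : Type*} [Group Q] [Fintype Q] [Fintype J] [CommRing A] (m : J → A) (q : Q) :
    ∑ F : Q → J, (if (fun a => F (a * q)) = F then ∏ a, m (F a) else 0) =
      (∑ j, m j ^ orderOf q) ^ (Nat.card Q / orderOf q) := by
  have hc : Nat.card Q / orderOf q = Fintype.card (Q ⧸ Subgroup.zpowers q) := by
    rw [Subgroup.card_eq_card_quotient_mul_card_subgroup (Subgroup.zpowers q), Nat.card_zpowers,
      Nat.mul_div_cancel _ (orderOf_pos q), Nat.card_eq_fintype_card]
  rw [hc, ← Finset.card_univ, ← Finset.prod_const, Finset.prod_univ_sum, Fintype.piFinset_univ,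
    ← Finset.sum_filter]
  symm
  refine Finset.sum_bij (fun F' _ => fun a => F' (QuotientGroup.mk a)) ?_ ?_ ?_ ?_
  · intro F' _
    simp only [Finset.mem_filter, Finset.mem_univ, true_and]
    funext a
    congr 1
    rw [QuotientGroup.eq]
    simp
  · intro F₁ _ F₂ _ h
    funext c
    induction c using QuotientGroup.induction_on with | _ a => exact congrFun h a
  · intro F hF
    simp only [Finset.mem_filter, Finset.mem_univ, true_and] at hF
    have hp : ∀ z ∈ Subgroup.zpowers q, ∀ a, F (a * z) = F a := by
      intro z hz
      rw [← mem_powers_iff_mem_zpowers] at hz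
      obtain ⟨i, rfl⟩ := hz
      induction i with
      | zero => simp
      | succ i ih =>
        intro a
        rw [← ih a, ← congrFun hF (a * q ^ i)]
        simp only [pow_succ, mul_assoc]
    refine ⟨fun c => Quotient.liftOn' c F ?_, Finset.mem_univ _, ?_⟩
    · intro a b hab
      rw [QuotientGroup.leftRel_apply] at hab
      have := hp _ hab a
      rw [← this]; simp
    · funext a; rfl
  · intro F' _
    rw [← Finset.prod_fiberwise (s := Finset.univ) (g := fun a : Q => (QuotientGroup.mk a : Q ⧸ Subgroup.zpowers q))]
    refine Finset.prod_congr rfl fun c _ => ?_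
    rw [Finset.prod_congr rfl (g := fun _ => m (F' c)) (by
      intro a ha; rw [Finset.mem_filter] at ha; rw [← ha.2]), Finset.prod_const]
    congr 1
    rw [← Nat.card_zpowers]
    induction c using QuotientGroup.induction_on with | _ b =>
    rw [Nat.card_eq_fintype_card, ← Finset.card_univ]
    refine Finset.card_bij (fun z _ => b * (z : Q)) ?_ ?_ ?_
    · intro z _
      simp only [Finset.mem_filter, Finset.mem_univ, true_and]
      symm
      rw [QuotientGroup.eq]; simp
    · intro z _ z' _ h; exact Subtype.ext (mul_left_cancel h)
    · intro a ha
      simp only [Finset.mem_filter, Finset.mem_univ, true_and] at ha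
      have := QuotientGroup.eq.1 ha.symm
      exact ⟨⟨_, this⟩, Finset.mem_univ _, by simp⟩

theorem necklace {Q J A : Type*} [Group Q] [Fintype Q] [Fintype J] [CommRing A] (m : J → A) :
    (Nat.card Q : A) ∣ ∑ q : Q, (∑ j, m j ^ orderOf q) ^ (Nat.card Q / orderOf q) := by
  simp_rw [← sum_fixed]
  rw [Finset.sum_comm]
  let _ := rightArrowAction Q J
  apply orbit_dvd (W := Q)
  · intro w F
    have hw : ∏ a, m ((w • F) a) = ∏ a, m (F a) :=
      Fintype.prod_equiv (Equiv.mulRight w) _ _ (fun a => rfl)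
    rw [hw]
    refine Fintype.sum_equiv (MulAut.conj w⁻¹).toEquiv _ _ fun q => ?_
    have : ((fun a => (w • F) (a * q)) = w • F) ↔
      ((fun a => F (a * (MulAut.conj w⁻¹).toEquiv q)) = F) := by
      change (q • w • F = w • F) ↔ ((w⁻¹ * q * w⁻¹⁻¹) • F = F)
      rw [inv_inv, mul_smul, mul_smul, inv_smul_eq_iff]
    simp only [this]
  · intro F
    rw [← Finset.sum_filter, Finset.sum_const, nsmul_eq_mul]
    have : (Finset.univ.filter (fun q : Q => (fun a => F (a * q)) = F)).card =
        Nat.card (stabilizer Q F) := by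
      rw [Nat.card_eq_fintype_card, Fintype.card_subtype]; rfl
    rw [this]
    exact dvd_mul_right _ _

theorem pos_rep {σ : Type*} (n : ℕ) (hn : 0 < n) (f : MvPolynomial σ ℤ) :
    ∃ (J : Type) (_ : Fintype J) (m : J → MvPolynomial σ ℤ) (h : MvPolynomial σ ℤ),
      (∀ p j, MvPolynomial.expand p (m j) = m j ^ p) ∧ f = ∑ j, m j + n * h := by
  induction f using MvPolynomial.induction_on with
  | C a =>
    refine ⟨Fin (a % n).toNat, inferInstance, fun _ => 1, MvPolynomial.C (a / n), by simp, ?_⟩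
    have h0 : 0 ≤ a % n := Int.emod_nonneg _ (by omega)
    have h1 : a = ((a % n).toNat : ℤ) + n * (a / n) := by
      rw [Int.toNat_of_nonneg h0, Int.emod_add_mul_ediv]
    conv_lhs => rw [h1]
    simp only [map_add, map_mul, Finset.sum_const, Finset.card_univ, Fintype.card_fin, nsmul_eq_mul,
      mul_one, map_natCast]
  | add p q hp hq =>
    obtain ⟨J, _, m, h, hm, e⟩ := hp
    obtain ⟨J', _, m', h', hm', e'⟩ := hq
    refine ⟨J ⊕ J', inferInstance, Sum.elim m m', h + h', ?_, ?_⟩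
    · rintro p (j | j)
      · exact hm p j
      · exact hm' p j
    · rw [Fintype.sum_sum_type, e, e']; simp; ring
  | mul_X p i hp =>
    obtain ⟨J, _, m, h, hm, e⟩ := hp
    refine ⟨J, inferInstance, fun j => m j * MvPolynomial.X i, h * MvPolynomial.X i, ?_, ?_⟩
    · intro p j
      rw [map_mul, hm, mul_pow, MvPolynomial.expand_X]
    · rw [e, ← Finset.sum_mul]; ring

theorem poly_necklace {Q σ : Type*} [Group Q] [Fintype Q] (f : MvPolynomial σ ℤ) :
    (Nat.card Q : MvPolynomial σ ℤ) ∣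
      ∑ q : Q, (MvPolynomial.expand (orderOf q) f) ^ (Nat.card Q / orderOf q) := by
  obtain ⟨J, _, m, h, hm, e⟩ := pos_rep (Nat.card Q) Nat.card_pos f
  refine (dvd_iff_dvd_of_dvd_sub (a := (Nat.card Q : MvPolynomial σ ℤ)) ?_).1 (necklace (Q := Q) m)
  · rw [← Finset.sum_sub_distrib]
    refine Finset.dvd_sum fun q _ => ?_
    rw [dvd_sub_comm]
    refine dvd_trans ?_ (sub_dvd_pow_sub_pow _ _ _)
    rw [e]
    simp only [map_add, map_sum, hm, map_mul, map_natCast, add_sub_cancel_left]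
    exact dvd_mul_right _ _

theorem card_sup {S : Type*} [Group S] [Finite S] (K : Subgroup S) [K.Normal] (n : S) :
    Nat.card (Subgroup.zpowers n ⊔ K : Subgroup S) =
      Nat.card K * orderOf (QuotientGroup.mk n : S ⧸ K) := by
  have h : (Subgroup.zpowers n ⊔ K) =
      (Subgroup.zpowers (QuotientGroup.mk n : S ⧸ K)).comap (QuotientGroup.mk' K) := by
    have : Subgroup.zpowers (QuotientGroup.mk n : S ⧸ K) =
      (Subgroup.zpowers n).map (QuotientGroup.mk' K) := by
      rw [MonoidHom.map_zpowers]; rfl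
    rw [this, Subgroup.comap_map_eq, QuotientGroup.ker_mk']
  have h1 := Subgroup.index_comap_of_surjective (Subgroup.zpowers (QuotientGroup.mk n : S ⧸ K))
    (QuotientGroup.mk'_surjective K)
  rw [← h] at h1
  have h2 := Subgroup.card_mul_index (Subgroup.zpowers n ⊔ K)
  have h3 := Subgroup.card_mul_index (Subgroup.zpowers (QuotientGroup.mk n : S ⧸ K))
  have h4 := Subgroup.card_eq_card_quotient_mul_card_subgroup K
  rw [Nat.card_zpowers] at h3
  rw [h1] at h2
  have h5 : 0 < (Subgroup.zpowers (QuotientGroup.mk n : S ⧸ K)).index :=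
    Nat.pos_of_ne_zero Subgroup.index_ne_zero_of_finite
  apply Nat.eq_of_mul_eq_mul_right h5
  rw [h2, h4, ← h3]; ring

theorem group_dvd {S σ : Type*} [Group S] [Fintype S] (K : Subgroup S) [K.Normal]
    (f : MvPolynomial σ ℤ) (m : ℕ) (hm : Nat.card S ∣ m) :
    (Nat.card S : MvPolynomial σ ℤ) ∣
      ∑ n : S, (MvPolynomial.expand (Nat.card (Subgroup.zpowers n ⊔ K : Subgroup S) / Nat.card K) f)
        ^ (m / Nat.card (Subgroup.zpowers n ⊔ K : Subgroup S)) := by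
  obtain ⟨t, rfl⟩ := hm
  have hK : 0 < Nat.card K := Nat.card_pos
  have h4 := Subgroup.card_eq_card_quotient_mul_card_subgroup K
  simp only [card_sup, Nat.mul_div_cancel_left _ hK]
  rw [← Finset.sum_fiberwise (s := Finset.univ) (g := fun n : S => (QuotientGroup.mk n : S ⧸ K))]
  have : ∀ q : S ⧸ K, ∑ n with (QuotientGroup.mk n : S ⧸ K) = q,
      (MvPolynomial.expand (orderOf (QuotientGroup.mk n : S ⧸ K)) f)
        ^ (Nat.card S * t / (Nat.card K * orderOf (QuotientGroup.mk n : S ⧸ K))) =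
      Nat.card K * (MvPolynomial.expand (orderOf q) (f ^ t)) ^ (Nat.card (S ⧸ K) / orderOf q) := by
    intro q
    rw [Finset.sum_congr rfl (g := fun _ => (MvPolynomial.expand (orderOf q) (f ^ t)) ^
      (Nat.card (S ⧸ K) / orderOf q)), Finset.sum_const, nsmul_eq_mul]
    · congr 2
      induction q using QuotientGroup.induction_on with | _ b =>
      rw [Nat.card_eq_fintype_card, ← Finset.card_univ]
      symm
      refine Finset.card_bij (fun z _ => b * (z : S)) ?_ ?_ ?_
      · intro z _
        simp only [Finset.mem_filter, Finset.mem_univ, true_and]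
        symm
        rw [QuotientGroup.eq]; simp
      · intro z _ z' _ h; exact Subtype.ext (mul_left_cancel h)
      · intro a ha
        simp only [Finset.mem_filter, Finset.mem_univ, true_and] at ha
        have := QuotientGroup.eq.1 ha.symm
        exact ⟨⟨_, this⟩, Finset.mem_univ _, by simp⟩
    · intro n hn
      rw [Finset.mem_filter] at hn
      rw [hn.2, map_pow, ← pow_mul]
      congr 1
      obtain ⟨e, he⟩ := orderOf_dvd_natCard q
      have hq : 0 < orderOf q := orderOf_pos q
      rw [h4, he, Nat.mul_div_cancel_left _ hq]
      apply Nat.div_eq_of_eq_mul_left (by positivity)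
      ring
  rw [Finset.sum_congr rfl (fun q _ => this q), ← Finset.mul_sum, h4]
  push_cast
  rw [mul_comm]
  exact mul_dvd_mul_left _ (poly_necklace (Q := S ⧸ K) (f ^ t))

theorem card_fixed {G : Type*} [Group G] [Fintype G] (K V : Subgroup G) :
    Nat.card (fixedPoints K (G ⧸ V)) =
      (Finset.univ.filter (fun x : G ⧸ V => K ≤ stabilizer G x)).card := by
  rw [Nat.card_eq_fintype_card, Fintype.card_subtype]
  congr 1
  ext x
  simp only [Finset.mem_filter, Finset.mem_univ, true_and, mem_fixedPoints]
  exact ⟨fun h k hk => h ⟨k, hk⟩, fun h k => h k.2⟩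

theorem card_stab {G : Type*} [Group G] [Fintype G] (V : Subgroup G) (x : G ⧸ V) :
    Nat.card (stabilizer G x) = Nat.card V := by
  have h1 := index_stabilizer_of_transitive G x
  have h2 := Subgroup.card_mul_index (stabilizer G x)
  have h3 := Subgroup.card_mul_index V
  rw [h1] at h2
  rw [Subgroup.index] at h3
  have h5 : 0 < Nat.card (G ⧸ V) := Nat.card_pos
  exact Nat.eq_of_mul_eq_mul_right h5 (h2.trans h3.symm)

theorem stab_eq {G : Type*} [Group G] (V : Subgroup G) (x : G ⧸ V) :
    ∃ g : ConjAct G, stabilizer G x = g • V := by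
  induction x using QuotientGroup.induction_on with | _ g =>
  refine ⟨ConjAct.toConjAct g, ?_⟩
  have : (g : G ⧸ V) = g • ((1 : G) : G ⧸ V) := by simp
  rw [this, stabilizer_smul_eq_stabilizer_map_conj, stabilizer_quotient]
  rfl

theorem conj_le_stab {G X : Type*} [Group G] [MulAction G X] (k : G) (K : Subgroup G) (x : X) :
    K.map (MulAut.conj k).toMonoidHom ≤ stabilizer G (k • x) ↔ K ≤ stabilizer G x := by
  rw [stabilizer_smul_eq_stabilizer_map_conj]
  exact Subgroup.map_le_map_iff_of_injective (MulAut.conj k).injective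

theorem card_fixed_conj {G : Type*} [Group G] [Fintype G] (K V : Subgroup G) (k : G) :
    Nat.card (fixedPoints (K.map (MulAut.conj k).toMonoidHom) (G ⧸ V)) =
    Nat.card (fixedPoints K (G ⧸ V)) := by
  rw [card_fixed, card_fixed]
  symm
  refine Finset.card_bij (fun x _ => k • x) ?_ ?_ ?_
  · intro x hx
    simp only [Finset.mem_filter, Finset.mem_univ, true_and] at hx ⊢
    rwa [conj_le_stab]
  · intro x _ y _ h; exact smul_left_cancel k h
  · intro x hx
    simp only [Finset.mem_filter, Finset.mem_univ, true_and] at hx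
    refine ⟨k⁻¹ • x, ?_, by simp⟩
    simp only [Finset.mem_filter, Finset.mem_univ, true_and]
    rw [← conj_le_stab k]; simpa using hx

theorem map_conj_normalizer {G : Type*} [Group G] (H : Subgroup G)
    (k : Subgroup.normalizer (H : Set G)) :
    H.map (MulAut.conj (k : G)).toMonoidHom = H := by
  ext x
  rw [Subgroup.mem_map]
  constructor
  · rintro ⟨h, hh, rfl⟩
    exact (Subgroup.mem_normalizer_iff.1 k.2 h).1 hh
  · intro hx
    refine ⟨(k : G)⁻¹ * x * k, ?_, ?_⟩
    · rw [Subgroup.mem_normalizer_iff.1 k.2]; convert hx using 1; group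
    · change (k : G) * ((k : G)⁻¹ * x * k) * (k : G)⁻¹ = x; group

theorem sup_conj {G : Type*} [Group G] (H : Subgroup G)
    (k n : Subgroup.normalizer (H : Set G)) :
    Subgroup.zpowers ((k * n * k⁻¹ : Subgroup.normalizer (H : Set G)) : G) ⊔ H =
      (Subgroup.zpowers (n : G) ⊔ H).map (MulAut.conj (k : G)).toMonoidHom := by
  rw [Subgroup.map_sup, map_conj_normalizer, MonoidHom.map_zpowers]
  rfl

theorem congr_term {G σ : Type*} [Group G] [Fintype G] (H V : Subgroup G) (f : MvPolynomial σ ℤ) :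
    (Nat.card (Subgroup.normalizer (H : Set G)) : MvPolynomial σ ℤ) ∣
      ∑ n : Subgroup.normalizer (H : Set G),
        MvPolynomial.expand
          (Nat.card (Subgroup.zpowers (n : G) ⊔ H : Subgroup G) / Nat.card H)
          ((Nat.card (fixedPoints (Subgroup.zpowers (n : G) ⊔ H : Subgroup G) (G ⧸ V)) :
            MvPolynomial σ ℤ) *
            f ^ (Nat.card V / Nat.card (Subgroup.zpowers (n : G) ⊔ H : Subgroup G))) := by
  simp only [map_mul, map_natCast, map_pow]
  simp only [card_fixed, Finset.card_filter, Nat.cast_sum,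
    Finset.sum_mul, Nat.cast_ite, Nat.cast_one, Nat.cast_zero, ite_mul, one_mul, zero_mul]
  rw [Finset.sum_comm]
  apply orbit_dvd (W := Subgroup.normalizer (H : Set G))
  · intro k x
    symm
    refine Fintype.sum_equiv (MulAut.conj k).toEquiv _ _ fun n => ?_
    have e : (MulAut.conj k).toEquiv n = k * n * k⁻¹ := rfl
    rw [e]
    simp only [sup_conj]
    rw [Subgroup.card_map_of_injective (MulAut.conj (k : G)).injective]
    have := conj_le_stab (k : G) (Subgroup.zpowers (n : G) ⊔ H) x
    change _ ≤ stabilizer G (k • x) ↔ _ at this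
    simp only [this]
  · intro x
    by_cases hx : H ≤ stabilizer G x
    swap
    · rw [Finset.sum_eq_zero]
      · exact dvd_zero _
      · intro n _
        rw [if_neg]
        exact fun h => hx (le_sup_right.trans h)
    set S := stabilizer (Subgroup.normalizer (H : Set G)) x with hS
    let K : Subgroup S := (H.subgroupOf (Subgroup.normalizer (H : Set G))).subgroupOf S
    have hKS : H.subgroupOf (Subgroup.normalizer (H : Set G)) ≤ S := fun n hn => hx hn
    have hHmap : K.map ((Subgroup.normalizer (H : Set G)).subtype.comp S.subtype) = H := by
      rw [← Subgroup.map_map, Subgroup.map_subgroupOf_eq_of_le hKS,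
        Subgroup.map_subgroupOf_eq_of_le Subgroup.le_normalizer]
    have hinj : Function.Injective ((Subgroup.normalizer (H : Set G)).subtype.comp S.subtype) :=
      fun a b h => Subtype.ext (Subtype.ext h)
    have hmap : ∀ n : S, (Subgroup.zpowers n ⊔ K).map
        ((Subgroup.normalizer (H : Set G)).subtype.comp S.subtype) =
        Subgroup.zpowers ((n : Subgroup.normalizer (H : Set G)) : G) ⊔ H := by
      intro n
      rw [Subgroup.map_sup, hHmap, MonoidHom.map_zpowers]; rfl
    have hcard : ∀ n : S, Nat.card (Subgroup.zpowers
        ((n : Subgroup.normalizer (H : Set G)) : G) ⊔ H : Subgroup G) =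
        Nat.card (Subgroup.zpowers n ⊔ K : Subgroup S) := by
      intro n
      rw [← hmap, Subgroup.card_map_of_injective hinj]
    have hKcard : Nat.card H = Nat.card K := by
      rw [← Subgroup.card_map_of_injective hinj, hHmap]
    have hm : Nat.card S ∣ Nat.card V := by
      rw [← card_stab V x]
      have : Nat.card S = Nat.card (S.map (Subgroup.normalizer (H : Set G)).subtype) :=
        (Subgroup.card_map_of_injective Subtype.val_injective).symm
      rw [this]
      apply Subgroup.card_dvd_of_le
      rintro _ ⟨n, hn, rfl⟩
      exact hn
    have key := group_dvd K f (Nat.card V) hm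
    rw [← Finset.sum_filter]
    rw [Finset.sum_subtype (p := fun n => n ∈ S)]
    · simp only [hcard, hKcard]
      exact key
    · intro n
      simp only [Finset.mem_filter, Finset.mem_univ, true_and, sup_le_iff, hx, and_true,
        Subgroup.zpowers_le]
      rfl

theorem card_fixed_self {G : Type*} [Group G] [Fintype G] (K : Subgroup G) :
    Nat.card (fixedPoints K (G ⧸ K)) * Nat.card K = Nat.card (Subgroup.normalizer (K : Set G)) := by
  rw [Nat.card_congr (Sylow.fixedPointsMulLeftCosetsEquivQuotient K),
    Subgroup.card_eq_card_quotient_mul_card_subgroup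
      (K.subgroupOf (Subgroup.normalizer (K : Set G))),
    Nat.card_congr (Subgroup.subgroupOfEquivOfLe (Subgroup.le_normalizer (H := K))).toEquiv]
  rfl

theorem card_fixed_zero {G : Type*} [Group G] [Fintype G] (K V : Subgroup G)
    (h : Nat.card V ≤ Nat.card K) (h' : ∀ g : ConjAct G, K ≠ g • V) :
    Nat.card (fixedPoints K (G ⧸ V)) = 0 := by
  rw [card_fixed, Finset.card_eq_zero, Finset.filter_eq_empty_iff]
  intro x _ hx
  obtain ⟨g, hg⟩ := stab_eq V x
  refine h' g ?_
  rw [← hg]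
  refine Subgroup.eq_of_le_of_card_ge hx ?_
  rw [card_stab]; exact h

theorem card_conjAct {G : Type*} [Group G] (g : ConjAct G) (V : Subgroup G) :
    Nat.card (g • V : Subgroup G) = Nat.card V :=
  (Nat.card_congr (Subgroup.equivSMul g V).toEquiv).symm

/-- The difference of both sides of the claimed identity. -/
noncomputable def xiDefect {G σ : Type*} [Group G] [Fintype G] {k : ℕ} (V : Fin k → Subgroup G)
    (ε : Fin k → ℤ) (s : Fin k → MvPolynomial σ ℤ)
    (ξ : SubgroupConjClasses G → MvPolynomial σ ℤ) (K : Subgroup G) : MvPolynomial σ ℤ :=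
  ∑ i, (ε i : MvPolynomial σ ℤ) * ((Nat.card (fixedPoints K (G ⧸ V i)) : MvPolynomial σ ℤ) *
      s i ^ (Nat.card (V i) / Nat.card K)) -
    ∑ C : SubgroupConjClasses G,
      (Nat.card (fixedPoints K (G ⧸ (Quotient.out C : Subgroup G))) : MvPolynomial σ ℤ) *
        ξ C ^ (Nat.card (Quotient.out C : Subgroup G) / Nat.card K)

theorem xiDefect_conj {G σ : Type*} [Group G] [Fintype G] {k : ℕ} (V : Fin k → Subgroup G)
    (ε : Fin k → ℤ) (s : Fin k → MvPolynomial σ ℤ)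
    (ξ : SubgroupConjClasses G → MvPolynomial σ ℤ) (K : Subgroup G) (g : ConjAct G) :
    xiDefect V ε s ξ (g • K) = xiDefect V ε s ξ K := by
  have h : ∀ U : Subgroup G, Nat.card (fixedPoints (g • K : Subgroup G) (G ⧸ U)) =
      Nat.card (fixedPoints K (G ⧸ U)) := fun U => card_fixed_conj K U (ConjAct.ofConjAct g)
  simp only [xiDefect, h, card_conjAct]

theorem xiDefect_dvd {G σ : Type*} [Group G] [Fintype G] {k : ℕ} (V : Fin k → Subgroup G)
    (ε : Fin k → ℤ) (s : Fin k → MvPolynomial σ ℤ)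
    (ξ : SubgroupConjClasses G → MvPolynomial σ ℤ) (H : Subgroup G) :
    (Nat.card (Subgroup.normalizer (H : Set G)) : MvPolynomial σ ℤ) ∣
      ∑ n : Subgroup.normalizer (H : Set G),
        MvPolynomial.expand
          (Nat.card (Subgroup.zpowers (n : G) ⊔ H : Subgroup G) / Nat.card H)
          (xiDefect V ε s ξ (Subgroup.zpowers (n : G) ⊔ H)) := by
  simp only [xiDefect, map_sub, map_sum, Finset.sum_sub_distrib]
  apply dvd_sub
  · rw [Finset.sum_comm]
    refine Finset.dvd_sum fun i _ => ?_
    simp only [map_mul _ (ε i : MvPolynomial σ ℤ), map_intCast]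
    rw [← Finset.mul_sum]
    exact (congr_term H (V i) (s i)).mul_left _
  · rw [Finset.sum_comm]
    exact Finset.dvd_sum fun C _ => congr_term H _ _

theorem xiDefect_dvd_self {G σ : Type*} [Group G] [Fintype G] {k : ℕ} (V : Fin k → Subgroup G)
    (ε : Fin k → ℤ) (s : Fin k → MvPolynomial σ ℤ)
    (ξ : SubgroupConjClasses G → MvPolynomial σ ℤ) (H : Subgroup G)
    (hH : ∀ K : Subgroup G, Nat.card H < Nat.card K → xiDefect V ε s ξ K = 0) :
    (Nat.card (fixedPoints H (G ⧸ H)) : MvPolynomial σ ℤ) ∣ xiDefect V ε s ξ H := by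
  have h := xiDefect_dvd V ε s ξ H
  have hpos : 0 < Nat.card H := Nat.card_pos
  have hterm : ∀ n : Subgroup.normalizer (H : Set G),
      MvPolynomial.expand
          (Nat.card (Subgroup.zpowers (n : G) ⊔ H : Subgroup G) / Nat.card H)
          (xiDefect V ε s ξ (Subgroup.zpowers (n : G) ⊔ H)) =
      if n ∈ H.subgroupOf (Subgroup.normalizer (H : Set G)) then xiDefect V ε s ξ H else 0 := by
    intro n
    split_ifs with hn
    · have : Subgroup.zpowers (n : G) ⊔ H = H := by
        rw [sup_eq_right, Subgroup.zpowers_le]; exact hn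
      rw [this, Nat.div_self hpos, MvPolynomial.expand_one_apply]
    · rw [hH, map_zero]
      by_contra hlt
      apply hn
      have := Subgroup.eq_of_le_of_card_ge (H := H) (K := Subgroup.zpowers (n : G) ⊔ H)
        le_sup_right (not_lt.1 hlt)
      change (n : G) ∈ H
      exact this.ge ((le_sup_left : Subgroup.zpowers (n : G) ≤ Subgroup.zpowers (n : G) ⊔ H)
        (Subgroup.mem_zpowers (n : G)))
  rw [Finset.sum_congr rfl (fun n _ => hterm n), ← Finset.sum_filter, Finset.sum_const,
    nsmul_eq_mul] at h
  have hc : (Finset.univ.filter (fun n => n ∈ H.subgroupOf (Subgroup.normalizer (H : Set G)))).card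
      = Nat.card H := by
    rw [← Nat.card_congr (Subgroup.subgroupOfEquivOfLe (Subgroup.le_normalizer (H := H))).toEquiv,
      Nat.card_eq_fintype_card, Fintype.card_subtype]
  rw [hc, ← card_fixed_self, mul_comm, Nat.cast_mul, mul_comm (Nat.card H : MvPolynomial σ ℤ),
    mul_comm (Nat.card H : MvPolynomial σ ℤ)] at h
  refine (mul_dvd_mul_iff_right ?_).1 h
  exact_mod_cast hpos.ne'

theorem exists_xi {G σ : Type*} [Group G] [Fintype G] {k : ℕ} (V : Fin k → Subgroup G)
    (ε : Fin k → ℤ) (s : Fin k → MvPolynomial σ ℤ) (r : ℕ) :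
    ∃ ξ : SubgroupConjClasses G → MvPolynomial σ ℤ,
      ∀ K : Subgroup G, Nat.card G < Nat.card K + r → xiDefect V ε s ξ K = 0 := by
  induction r with
  | zero =>
    refine ⟨0, fun K hK => ?_⟩
    have := Subgroup.card_le_card_group K
    omega
  | succ r ih =>
    obtain ⟨ξ, hξ⟩ := ih
    have hq : ∀ C : SubgroupConjClasses G, ∃ q : MvPolynomial σ ℤ,
        (Nat.card (Quotient.out C : Subgroup G) + r = Nat.card G →
          xiDefect V ε s ξ (Quotient.out C) =
            Nat.card (fixedPoints (Quotient.out C : Subgroup G)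
              (G ⧸ (Quotient.out C : Subgroup G))) * q) ∧
        (Nat.card (Quotient.out C : Subgroup G) + r ≠ Nat.card G → q = 0) := by
      intro C
      by_cases hC : Nat.card (Quotient.out C : Subgroup G) + r = Nat.card G
      · obtain ⟨q, hq⟩ := xiDefect_dvd_self V ε s ξ (Quotient.out C)
          (fun K hK => hξ K (by omega))
        exact ⟨q, fun _ => hq, fun h => absurd hC h⟩
      · exact ⟨0, fun h => absurd h hC, fun _ => rfl⟩
    choose q hq hq0 using hq
    refine ⟨fun C => ξ C + q C, fun K hK => ?_⟩
    by_cases hK' : Nat.card G < Nat.card K + r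
    · rw [← hξ K hK']
      unfold xiDefect
      congr 1
      refine Finset.sum_congr rfl fun C _ => ?_
      by_cases hC : Nat.card (Quotient.out C : Subgroup G) + r = Nat.card G
      · rw [card_fixed_zero]
        · simp
        · omega
        · intro g hg
          have := card_conjAct g (Quotient.out C : Subgroup G)
          rw [← hg] at this
          omega
      · simp only [hq0 C hC, add_zero]
    · have hKr : Nat.card K + r = Nat.card G := by omega
      let C₀ : SubgroupConjClasses G := Quotient.mk'' K
      obtain ⟨g, hg⟩ : ∃ g : ConjAct G, g • (Quotient.out C₀ : Subgroup G) = K := by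
        have : (Quotient.mk'' K : SubgroupConjClasses G) = Quotient.mk'' (Quotient.out C₀) :=
          (Quotient.out_eq' C₀).symm
        rw [Quotient.eq''] at this
        exact this
      have hC₀ : Nat.card (Quotient.out C₀ : Subgroup G) + r = Nat.card G := by
        rw [← hKr, ← hg, card_conjAct]
      rw [← hg, xiDefect_conj]
      have h1 := hq C₀ hC₀
      have h2 : xiDefect V ε s (fun C => ξ C + q C) (Quotient.out C₀) =
          xiDefect V ε s ξ (Quotient.out C₀) -
            Nat.card (fixedPoints (Quotient.out C₀ : Subgroup G)
              (G ⧸ (Quotient.out C₀ : Subgroup G))) * q C₀ := by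
        unfold xiDefect
        rw [sub_sub]
        congr 1
        rw [← Finset.add_sum_erase _ _ (Finset.mem_univ C₀),
          ← Finset.add_sum_erase (a := C₀) _ (fun C => (Nat.card (fixedPoints
            (Quotient.out C₀ : Subgroup G) (G ⧸ (Quotient.out C : Subgroup G))) :
              MvPolynomial σ ℤ) * ξ C ^ _) (Finset.mem_univ C₀),
          Nat.div_self Nat.card_pos, pow_one, pow_one, mul_add, add_right_comm]
        congr 2
        refine Finset.sum_congr rfl fun C hC => ?_
        by_cases hCr : Nat.card (Quotient.out C : Subgroup G) + r = Nat.card G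
        · rw [card_fixed_zero]
          · simp
          · omega
          · intro g hg
            apply (Finset.mem_erase.1 hC).1
            rw [← Quotient.out_eq' C, ← Quotient.out_eq' C₀, eq_comm, Quotient.eq'']
            exact ⟨g, hg.symm⟩
        · simp only [hq0 C hCr, add_zero]
      rw [h2, h1, sub_self]

/-- For every sequence `V₁, …, V_k` of subgroups of a finite group `G` and signs
`ε₁, …, ε_k ∈ {±1}` there exists, for every conjugacy class of subgroups `U ≤ G`, an
integral polynomial `ξ_U ∈ ℤ[x₁, …, x_k]` such that for every commutative ring `R`,
every subgroup `H ≤ G` and all `s₁, …, s_k ∈ R`: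
`Σ_{i=1}^k ε_i |(G/V_i)^H| s_i^{(V_i:H)} = Σ'_{U ≤ G} |(G/U)^H| (ξ_U(s₁,…,s_k))^{(U:H)}`,
the primed sum having exactly one summand for each conjugacy class of subgroups of `G`. -/
theorem xi_polynomials_exist (G : Type u) [Group G] [Fintype G]
    (k : ℕ) (V : Fin k → Subgroup G) (ε : Fin k → ℤ) (hε : ∀ i, ε i = 1 ∨ ε i = -1) :
    ∃ ξ : SubgroupConjClasses G → MvPolynomial (Fin k) ℤ,
      ∀ (R : Type u) [CommRing R] (H : Subgroup G) (s : Fin k → R),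
        ∑ i, (ε i : R) * (Nat.card (MulAction.fixedPoints H (G ⧸ V i)) : R) *
            s i ^ (Nat.card (V i) / Nat.card H) =
        ∑ᶠ C : SubgroupConjClasses G,
          (Nat.card (MulAction.fixedPoints H
              (G ⧸ (Quotient.out C : Subgroup G))) : R) *
            (MvPolynomial.aeval s (ξ C)) ^
              (Nat.card (Quotient.out C : Subgroup G) / Nat.card H) := by
  obtain ⟨ξ, hξ⟩ := exists_xi V ε (fun i => (MvPolynomial.X i : MvPolynomial (Fin k) ℤ)) (Nat.card G)
  refine ⟨ξ, fun R _ H s => ?_⟩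
  have h := hξ H (by have : 0 < Nat.card H := Nat.card_pos; omega)
  rw [xiDefect, sub_eq_zero] at h
  have h' := congrArg (MvPolynomial.aeval s) h
  simp only [map_sum, map_mul, map_pow, map_natCast, map_intCast, MvPolynomial.aeval_X] at h'
  rw [finsum_eq_sum_of_fintype, ← h']
  exact Finset.sum_congr rfl fun i _ => mul_assoc _ _ _
end
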